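/- arXiv:2506.23970 — 3 statements merged into one kernel-verified Lean document; each statement's English description precedes it below -/
import Mathlib

section
/- For every c ∈ (0,1/2] there exists a constant C = C(c) > 1 such that for every function p = p(n) ∈ [C·(log n)/n, 1], the probability that the random graph G ~ G(n, p(n)) contains a vertex set S with 1 ≤ |S| ≤ ⌈c/p(n)⌉ and |N(S)| < |S|·(n-|S|)·p(n)/2 is o(n^{-2}) as n → ∞. -/
open Filter Asymptotics

open Classical in
/-- Probability that the Erdős–Rényi random graph `G(n,p)` satisfies the property `A`:
each graph `G` on `[n]` receives probability `p^{e(G)} (1-p)^{C(n,2)-e(G)}`. -/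
noncomputable def erProb (n : ℕ) (p : ℝ) (A : SimpleGraph (Fin n) → Prop) : ℝ :=
  ∑ G : SimpleGraph (Fin n),
    if A G then p ^ (Nat.card G.edgeSet) * (1 - p) ^ (n.choose 2 - Nat.card G.edgeSet)
    else 0

/-!
For a fixed vertex set `S` the exponential moment of `|N(S)|` is computed exactly,
`𝔼 x ^ |N(S)| = (x + (1 - x) (1 - p) ^ |S|) ^ (n - |S|)`, by writing `x ^ |N(S)|` as the probability
that a random subset of `Sᶜ`, keeping each vertex with probability `1 - x`, misses `N(S)`.
As long as `(|S| - 1) p ≤ c < 1`, the second Bonferroni inequality bounds the mean of `|N(S)|` below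
by `(1 - c / 2) |S| (n - |S|) p`. This exceeds the threshold by a constant factor, so the Chernoff
bound gives a failure probability `exp (-δ |S| (n - |S|) p) ≤ n ^ (-4 |S|)`, and a union bound over
all `S` concludes.
-/

section BinomialSubset

theorem sum_powerset_filter_disjoint {α R : Type*} [DecidableEq α] [CommSemiring R]
    {s t : Finset α} (hts : t ⊆ s) (a b : R) :
    ∑ u ∈ s.powerset with Disjoint u t, a ^ u.card * b ^ (s.card - u.card) =
      b ^ t.card * (a + b) ^ (s.card - t.card) := by
  have avoiding : {u ∈ s.powerset | Disjoint u t} = (s \ t).powerset := by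
    ext u
    simp only [Finset.mem_filter, Finset.mem_powerset, Finset.subset_sdiff]
  rw [avoiding, ← Finset.card_sdiff_of_subset hts, ← Finset.sum_pow_mul_eq_add_pow, Finset.mul_sum]
  refine Finset.sum_congr rfl fun u hu => ?_
  have hcard_u := Finset.card_le_card (Finset.mem_powerset.mp hu)
  have hcard_t := Finset.card_sdiff_add_card_eq_card hts
  rw [show s.card - u.card = t.card + ((s \ t).card - u.card) by omega, pow_add]
  ring

theorem sum_nonempty_pow_card {α R : Type*} [Fintype α] [CommRing R] (r : R) :
    ∑ s : Finset α with s.Nonempty, r ^ s.card = (1 + r) ^ Fintype.card α - 1 := by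
  classical
  have total : ∑ s : Finset α, r ^ s.card = (r + 1) ^ Fintype.card α := by
    simpa using Fintype.sum_pow_mul_eq_add_pow α r 1
  have nonempty_eq : ({s : Finset α | s.Nonempty} : Finset (Finset α)) = Finset.univ.erase ∅ := by
    ext s
    simp [Finset.nonempty_iff_ne_empty]
  rw [nonempty_eq, Finset.sum_erase_eq_sub (Finset.mem_univ _), total, add_comm r,
    Finset.card_empty, pow_zero]

end BinomialSubset

section RealBounds

theorem one_sub_pow_le_bonferroni {p : ℝ} (hp₀ : 0 ≤ p) (hp₁ : p ≤ 1) (k : ℕ) :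
    (1 - p) ^ k ≤ 1 - k * p + k * (k - 1) / 2 * p ^ 2 := by
  induction k with
  | zero => simp
  | succ k ih =>
    have cubic_nonneg : 0 ≤ (k * (k - 1) : ℝ) * p ^ 3 := by
      rcases k with _ | k
      · simp
      · push_cast
        rw [add_sub_cancel_right]
        positivity
    calc (1 - p) ^ (k + 1) = (1 - p) * (1 - p) ^ k := pow_succ' _ _
      _ ≤ (1 - p) * (1 - k * p + k * (k - 1) / 2 * p ^ 2) :=
        mul_le_mul_of_nonneg_left ih (sub_nonneg.mpr hp₁)
      _ ≤ 1 - (k + 1 : ℕ) * p + (k + 1 : ℕ) * ((k + 1 : ℕ) - 1) / 2 * p ^ 2 := by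
        push_cast
        linarith

theorem one_sub_pow_le_of_sub_one_mul_le {c p : ℝ} {k : ℕ} (hp₀ : 0 ≤ p) (hp₁ : p ≤ 1)
    (hk : (k - 1) * p ≤ c) : (1 - p) ^ k ≤ 1 - (1 - c / 2) * (k * p) := by
  have := mul_le_mul_of_nonneg_left hk (mul_nonneg k.cast_nonneg hp₀)
  linarith [one_sub_pow_le_bonferroni hp₀ hp₁ k]

theorem add_mul_one_sub_pow_le_exp {c p x : ℝ} {k : ℕ} (hp₀ : 0 ≤ p) (hp₁ : p ≤ 1) (hx : x ≤ 1)
    (hk : (k - 1) * p ≤ c) :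
    x + (1 - x) * (1 - p) ^ k ≤ Real.exp (-((1 - x) * (1 - c / 2) * (k * p))) := by
  have := mul_le_mul_of_nonneg_left (one_sub_pow_le_of_sub_one_mul_le hp₀ hp₁ hk)
    (sub_nonneg.mpr hx)
  linarith [Real.add_one_le_exp (-((1 - x) * (1 - c / 2) * (k * p)))]

theorem exists_neg_log_div_two_lt {c : ℝ} (hc : c < 1) :
    ∃ x ∈ Set.Ioo (0 : ℝ) 1, -Real.log x / 2 < (1 - x) * (1 - c / 2) := by
  obtain ⟨x, hcx, hx₁⟩ := exists_between (inv_lt_one_of_one_lt₀ (show 1 < 2 - c by linarith))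
  have hx₀ : 0 < x := (inv_pos.mpr (by linarith)).trans hcx
  refine ⟨x, ⟨hx₀, hx₁⟩, ?_⟩
  have hxc : x⁻¹ < 2 - c := inv_lt_of_inv_lt₀ (by linarith) hcx
  calc -Real.log x / 2 ≤ (x⁻¹ - 1) / 2 := by linarith [Real.one_sub_inv_le_log_of_pos hx₀]
    _ = (1 - x) * (x⁻¹ / 2) := by field_simp
    _ < (1 - x) * (1 - c / 2) := by gcongr; linarith

theorem one_add_pow_sub_one_le {r : ℝ} {n : ℕ} (hr : 0 ≤ r) (hnr : n * r ≤ 1) :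
    (1 + r) ^ n - 1 ≤ 2 * (n * r) := by
  have hnr₀ : 0 ≤ n * r := by positivity
  calc (1 + r) ^ n - 1 ≤ Real.exp r ^ n - 1 := by
        gcongr
        linarith [Real.add_one_le_exp r]
    _ = Real.exp (n * r) - 1 := by rw [Real.exp_nat_mul]
    _ ≤ |Real.exp (n * r) - 1| := le_abs_self _
    _ ≤ 2 * |n * r| := Real.abs_exp_sub_one_le (by rwa [abs_of_nonneg hnr₀])
    _ = 2 * (n * r) := by rw [abs_of_nonneg hnr₀]

end RealBounds

section RandomGraph

/-- The expectation of the random variable `X` on the Erdős–Rényi random graph `G(n,p)`, as a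
weighted sum over all graphs on `[n]`, with the weights of `erProb`. -/
noncomputable def erMean (n : ℕ) (p : ℝ) (X : SimpleGraph (Fin n) → ℝ) : ℝ :=
  ∑ G : SimpleGraph (Fin n),
    p ^ (Nat.card G.edgeSet) * (1 - p) ^ (n.choose 2 - Nat.card G.edgeSet) * X G

variable {n : ℕ} {p : ℝ}

theorem erMean_mono (hp₀ : 0 ≤ p) (hp₁ : p ≤ 1) {X Y : SimpleGraph (Fin n) → ℝ}
    (hXY : ∀ G, X G ≤ Y G) : erMean n p X ≤ erMean n p Y := by
  have : 0 ≤ 1 - p := sub_nonneg.mpr hp₁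
  exact Finset.sum_le_sum fun G _ => mul_le_mul_of_nonneg_left (hXY G) (by positivity)

theorem erMean_sum {ι : Type*} (s : Finset ι) (X : ι → SimpleGraph (Fin n) → ℝ) :
    erMean n p (fun G => ∑ i ∈ s, X i G) = ∑ i ∈ s, erMean n p (X i) := by
  simp only [erMean, Finset.mul_sum]
  exact Finset.sum_comm

theorem erMean_const_mul (a : ℝ) (X : SimpleGraph (Fin n) → ℝ) :
    erMean n p (fun G => a * X G) = a * erMean n p X := by
  simp only [erMean, Finset.mul_sum, mul_left_comm a]

theorem erProb_eq_erMean_ite (A : SimpleGraph (Fin n) → Prop) [DecidablePred A] :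
    erProb n p A = erMean n p fun G => if A G then 1 else 0 := by
  simp only [erProb, erMean, mul_ite, mul_one, mul_zero]
  congr!

theorem erProb_nonneg (hp₀ : 0 ≤ p) (hp₁ : p ≤ 1) (A : SimpleGraph (Fin n) → Prop) :
    0 ≤ erProb n p A := by
  have : 0 ≤ 1 - p := sub_nonneg.mpr hp₁
  exact Finset.sum_nonneg fun G _ => by split_ifs <;> positivity

theorem erProb_le_erMean (hp₀ : 0 ≤ p) (hp₁ : p ≤ 1) {A : SimpleGraph (Fin n) → Prop}
    {X : SimpleGraph (Fin n) → ℝ} (hX : ∀ G, 0 ≤ X G) (hAX : ∀ G, A G → 1 ≤ X G) :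
    erProb n p A ≤ erMean n p X := by
  classical
  rw [erProb_eq_erMean_ite]
  refine erMean_mono hp₀ hp₁ fun G => ?_
  split_ifs with hG
  · exact hAX G hG
  · exact hX G

theorem erProb_exists_mem_le_sum (hp₀ : 0 ≤ p) (hp₁ : p ≤ 1) {ι : Type*} (s : Finset ι)
    (A : ι → SimpleGraph (Fin n) → Prop) :
    erProb n p (fun G => ∃ i ∈ s, A i G) ≤ ∑ i ∈ s, erProb n p (A i) := by
  classical
  have indicator_nonneg (G) (i : ι) : (0 : ℝ) ≤ if A i G then 1 else 0 := by split_ifs <;> norm_num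
  simp only [erProb_eq_erMean_ite (A _), ← erMean_sum]
  refine erProb_le_erMean hp₀ hp₁ (fun G => Finset.sum_nonneg fun i _ => indicator_nonneg G i) ?_
  rintro G ⟨i, hi, hiG⟩
  simpa only [if_pos hiG] using
    Finset.single_le_sum (fun i _ => indicator_nonneg G i) hi

end RandomGraph

section EdgeIndependence

open Classical in
theorem sum_edgeFinset_eq_sum_powerset {V M : Type*} [Fintype V] [DecidableEq V] [AddCommMonoid M]
    (f : Finset (Sym2 V) → M) :
    ∑ G : SimpleGraph V, f G.edgeFinset =
      ∑ T ∈ (⊤ : SimpleGraph V).edgeFinset.powerset, f T := by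
  refine Finset.sum_bij' (fun G _ => G.edgeFinset)
    (fun T _ => SimpleGraph.fromEdgeSet (T : Set (Sym2 V))) ?_ ?_ ?_ ?_ ?_
  · exact fun G _ => Finset.mem_powerset.mpr (SimpleGraph.edgeFinset_mono le_top)
  · exact fun T _ => Finset.mem_univ _
  · exact fun G _ => by simp
  · intro T hT
    have hdiag : ∀ e ∈ T, ¬ e.IsDiag := fun e he =>
      SimpleGraph.not_isDiag_of_mem_edgeSet _
        (SimpleGraph.mem_edgeFinset.mp (Finset.mem_powerset.mp hT he))
    ext e
    simpa using hdiag e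
  · exact fun G _ => rfl

open Classical in
theorem erProb_disjoint_edgeFinset {n : ℕ} (p : ℝ) {F : Finset (Sym2 (Fin n))}
    (hF : F ⊆ (⊤ : SimpleGraph (Fin n)).edgeFinset) :
    erProb n p (fun G => Disjoint G.edgeFinset F) = (1 - p) ^ F.card := by
  have hcard : (⊤ : SimpleGraph (Fin n)).edgeFinset.card = n.choose 2 := by
    rw [SimpleGraph.card_edgeFinset_top_eq_card_choose_two, Fintype.card_fin]
  simp only [erProb_eq_erMean_ite, erMean, mul_ite, mul_one, mul_zero, Nat.card_eq_fintype_card,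
    ← SimpleGraph.edgeFinset_card, ← hcard]
  rw [sum_edgeFinset_eq_sum_powerset fun T => if Disjoint T F then
      p ^ T.card * (1 - p) ^ ((⊤ : SimpleGraph (Fin n)).edgeFinset.card - T.card) else 0,
    ← Finset.sum_filter, sum_powerset_filter_disjoint hF, add_sub_cancel, one_pow, mul_one]

theorem erProb_forall_not_adj {n : ℕ} (p : ℝ) {S T : Finset (Fin n)} (hST : Disjoint S T) :
    erProb n p (fun G => ∀ v ∈ S, ∀ w ∈ T, ¬ G.Adj v w) = (1 - p) ^ (S.card * T.card) := by
  classical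
  set F : Finset (Sym2 (Fin n)) := (S ×ˢ T).image fun e => s(e.1, e.2) with hF
  have hFcard : F.card = S.card * T.card := by
    rw [hF, Finset.card_image_of_injOn, Finset.card_product]
    rintro ⟨v, w⟩ hvw ⟨v', w'⟩ hvw' heq
    simp only [Finset.coe_product, Set.mem_prod, Finset.mem_coe] at hvw hvw'
    rcases Sym2.eq_iff.mp heq with ⟨rfl, rfl⟩ | ⟨rfl, rfl⟩
    · rfl
    · exact absurd hvw'.2 (Finset.disjoint_left.mp hST hvw.1)
  have hFtop : F ⊆ (⊤ : SimpleGraph (Fin n)).edgeFinset := by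
    simp only [hF, Finset.image_subset_iff, Finset.mem_product, SimpleGraph.mem_edgeFinset,
      SimpleGraph.mem_edgeSet, SimpleGraph.top_adj]
    exact fun e he => Finset.disjoint_iff_ne.mp hST _ he.1 _ he.2
  have not_adj_iff (G : SimpleGraph (Fin n)) :
      (∀ v ∈ S, ∀ w ∈ T, ¬ G.Adj v w) ↔ Disjoint G.edgeFinset F := by
    simp only [hF, Finset.disjoint_right, Finset.forall_mem_image, Finset.mem_product,
      SimpleGraph.mem_edgeFinset, SimpleGraph.mem_edgeSet, Prod.forall, and_imp]
    exact ⟨fun h v w hv hw => h v hv w hw, fun h v hv w hw => h v w hv hw⟩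
  simp only [not_adj_iff]
  rw [erProb_disjoint_edgeFinset p hFtop, hFcard]

end EdgeIndependence

section Neighborhood

open Classical in
/-- The neighbourhood `N(S)` of a vertex set `S`: the vertices outside `S` adjacent to a vertex
of `S`. -/
noncomputable def outerNeighborFinset {V : Type*} [Fintype V] (G : SimpleGraph V) (S : Finset V) :
    Finset V :=
  {w | w ∉ S ∧ ∃ v ∈ S, G.Adj v w}

theorem mem_outerNeighborFinset {V : Type*} [Fintype V] {G : SimpleGraph V} {S : Finset V}
    {w : V} : w ∈ outerNeighborFinset G S ↔ w ∉ S ∧ ∃ v ∈ S, G.Adj v w := by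
  simp only [outerNeighborFinset, Finset.mem_filter, Finset.mem_univ, true_and]

theorem natCard_eq_card_outerNeighborFinset {V : Type*} [Fintype V] (G : SimpleGraph V)
    (S : Finset V) :
    Nat.card {w : V | w ∉ S ∧ ∃ v ∈ S, G.Adj v w} = (outerNeighborFinset G S).card :=
  Nat.subtype_card _ fun _ => mem_outerNeighborFinset

theorem outerNeighborFinset_subset_compl {V : Type*} [Fintype V] [DecidableEq V]
    (G : SimpleGraph V) (S : Finset V) : outerNeighborFinset G S ⊆ Sᶜ := fun _ hw =>
  Finset.mem_compl.mpr (mem_outerNeighborFinset.mp hw).1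

theorem disjoint_outerNeighborFinset_iff {V : Type*} [Fintype V] [DecidableEq V]
    {G : SimpleGraph V} {S T : Finset V} (hT : T ⊆ Sᶜ) :
    Disjoint T (outerNeighborFinset G S) ↔ ∀ v ∈ S, ∀ w ∈ T, ¬ G.Adj v w := by
  simp only [Finset.disjoint_left, mem_outerNeighborFinset, not_and, not_exists]
  exact ⟨fun h v hv w hw => h hw (Finset.mem_compl.mp (hT hw)) v hv,
    fun h w hw _ v hv => h v hv w hw⟩

theorem pow_card_outerNeighborFinset_eq_sum {V R : Type*} [Fintype V] [DecidableEq V] [CommRing R]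
    (G : SimpleGraph V) (S : Finset V) (x : R) :
    x ^ (outerNeighborFinset G S).card =
      ∑ T ∈ Sᶜ.powerset, (1 - x) ^ T.card * x ^ (Sᶜ.card - T.card) *
        if Disjoint T (outerNeighborFinset G S) then 1 else 0 := by
  simp only [mul_ite, mul_one, mul_zero]
  rw [← Finset.sum_filter, sum_powerset_filter_disjoint (outerNeighborFinset_subset_compl G S),
    sub_add_cancel, one_pow, mul_one]

theorem erProb_disjoint_outerNeighborFinset {n : ℕ} (p : ℝ) {S T : Finset (Fin n)} (hT : T ⊆ Sᶜ) :
    erProb n p (fun G => Disjoint T (outerNeighborFinset G S)) = (1 - p) ^ (S.card * T.card) := by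
  simp only [disjoint_outerNeighborFinset_iff hT]
  exact erProb_forall_not_adj p (Finset.subset_compl_iff_disjoint_left.mp hT)

theorem erMean_pow_card_outerNeighborFinset {n : ℕ} (p : ℝ) (S : Finset (Fin n)) (x : ℝ) :
    erMean n p (fun G => x ^ (outerNeighborFinset G S).card) =
      (x + (1 - x) * (1 - p) ^ S.card) ^ (n - S.card) := by
  have hcard : Sᶜ.card = n - S.card := by rw [Finset.card_compl, Fintype.card_fin]
  simp only [pow_card_outerNeighborFinset_eq_sum, erMean_sum, erMean_const_mul]
  rw [← hcard, add_comm x, ← Finset.sum_pow_mul_eq_add_pow]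
  refine Finset.sum_congr rfl fun T hT => ?_
  rw [← erProb_eq_erMean_ite, erProb_disjoint_outerNeighborFinset p (Finset.mem_powerset.mp hT),
    pow_mul, mul_pow]
  ring

theorem erProb_card_outerNeighborFinset_lt_le {n : ℕ} {p x : ℝ} (hp₀ : 0 ≤ p) (hp₁ : p ≤ 1)
    (hx₀ : 0 < x) (hx₁ : x ≤ 1) (S : Finset (Fin n)) (a : ℝ) :
    erProb n p (fun G => ((outerNeighborFinset G S).card : ℝ) < a) ≤
      x ^ (-a) * (x + (1 - x) * (1 - p) ^ S.card) ^ (n - S.card) := by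
  rw [← erMean_pow_card_outerNeighborFinset, ← erMean_const_mul]
  refine erProb_le_erMean hp₀ hp₁ (fun G => by positivity) fun G hG => ?_
  rw [← Real.rpow_natCast, ← Real.rpow_add hx₀]
  exact Real.one_le_rpow_of_pos_of_le_one_of_nonpos hx₀ hx₁ (by linarith)

end Neighborhood

section Expansion

theorem exists_rate_erProb_outerNeighborFinset {c : ℝ} (hc : c < 1) :
    ∃ δ > 0, ∀ {n : ℕ} {p : ℝ} (S : Finset (Fin n)), 0 ≤ p → p ≤ 1 → (S.card - 1) * p ≤ c →
      erProb n p (fun G => ((outerNeighborFinset G S).card : ℝ) < S.card * (n - S.card) * p / 2) ≤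
        Real.exp (-(δ * (S.card * (n - S.card) * p))) := by
  obtain ⟨x, ⟨hx₀, hx₁⟩, hx⟩ := exists_neg_log_div_two_lt hc
  refine ⟨(1 - x) * (1 - c / 2) - -Real.log x / 2, sub_pos.mpr hx, fun {n p} S hp₀ hp₁ hS => ?_⟩
  have hcard : S.card ≤ n := by simpa using S.card_le_univ
  have : 0 ≤ x + (1 - x) * (1 - p) ^ S.card :=
    add_nonneg hx₀.le (mul_nonneg (sub_nonneg.mpr hx₁.le) (pow_nonneg (sub_nonneg.mpr hp₁) _))
  calc erProb n p (fun G => ((outerNeighborFinset G S).card : ℝ) < S.card * (n - S.card) * p / 2)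
      ≤ x ^ (-(S.card * (n - S.card) * p / 2)) *
          (x + (1 - x) * (1 - p) ^ S.card) ^ (n - S.card) :=
        erProb_card_outerNeighborFinset_lt_le hp₀ hp₁ hx₀ hx₁.le S _
    _ ≤ x ^ (-(S.card * (n - S.card) * p / 2)) *
          Real.exp (-((1 - x) * (1 - c / 2) * (S.card * p))) ^ (n - S.card) := by
        gcongr
        exact add_mul_one_sub_pow_le_exp hp₀ hp₁ hx₁.le hS
    _ = Real.exp (-(((1 - x) * (1 - c / 2) - -Real.log x / 2) *
          (S.card * (n - S.card) * p))) := by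
        rw [Real.rpow_def_of_pos hx₀, ← Real.exp_nat_mul, ← Real.exp_add, Nat.cast_sub hcard]
        ring_nf

theorem sub_one_mul_le_of_le_ceil_div {c p : ℝ} {k : ℕ} (hc : 0 ≤ c) (hp : 0 < p)
    (hk : k ≤ ⌈c / p⌉₊) : (k - 1) * p ≤ c := by
  have hk' : (k : ℝ) ≤ ⌈c / p⌉₊ := Nat.cast_le.mpr hk
  have hceil := Nat.ceil_lt_add_one (div_nonneg hc hp.le)
  exact (le_div_iff₀ hp).mp (by linarith)

theorem exp_neg_le_inv_pow_pow {n k m : ℕ} {p δ : ℝ} (hn : 0 < n) (hp₀ : 0 ≤ p) (hδ : 0 ≤ δ)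
    (hk : (2 * k : ℝ) ≤ n) (hlog : 2 * m * Real.log n ≤ δ * (n * p)) :
    Real.exp (-(δ * (k * (n - k) * p))) ≤ (((n : ℝ) ^ m)⁻¹) ^ k := by
  have half_le : (n / 2 : ℝ) ≤ n - k := by linarith
  have exponent_le : k * (m * Real.log n) ≤ δ * (k * (n - k) * p) :=
    calc k * (m * Real.log n) ≤ k * (δ * (n * p) / 2) := by gcongr; linarith
      _ = δ * (k * (n / 2) * p) := by ring
      _ ≤ δ * (k * (n - k) * p) := by gcongr
  calc Real.exp (-(δ * (k * (n - k) * p))) ≤ Real.exp (k * -(m * Real.log n)) := by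
        rw [Real.exp_le_exp]
        linarith
    _ = (((n : ℝ) ^ m)⁻¹) ^ k := by
        rw [Real.exp_nat_mul, Real.exp_neg, Real.exp_nat_mul, Real.exp_log (Nat.cast_pos.mpr hn)]

theorem erProb_exists_nonempty_le {n : ℕ} {p r : ℝ} (hp₀ : 0 ≤ p) (hp₁ : p ≤ 1) (hr : 0 ≤ r)
    (hnr : n * r ≤ 1) {s : Finset (Finset (Fin n))} (hs : ∀ S ∈ s, S.Nonempty)
    {A : Finset (Fin n) → SimpleGraph (Fin n) → Prop}
    (hA : ∀ S ∈ s, erProb n p (A S) ≤ r ^ S.card) :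
    erProb n p (fun G => ∃ S ∈ s, A S G) ≤ 2 * (n * r) := by
  calc erProb n p (fun G => ∃ S ∈ s, A S G) ≤ ∑ S ∈ s, erProb n p (A S) :=
        erProb_exists_mem_le_sum hp₀ hp₁ s A
    _ ≤ ∑ S ∈ s, r ^ S.card := Finset.sum_le_sum hA
    _ ≤ ∑ S : Finset (Fin n) with S.Nonempty, r ^ S.card :=
        Finset.sum_le_sum_of_subset_of_nonneg
          (fun S hS => Finset.mem_filter.mpr ⟨Finset.mem_univ S, hs S hS⟩)
          fun S _ _ => pow_nonneg hr _
    _ = (1 + r) ^ n - 1 := by rw [sum_nonempty_pow_card, Fintype.card_fin]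
    _ ≤ 2 * (n * r) := one_add_pow_sub_one_le hr hnr

theorem exists_erProb_outerNeighborFinset_lt_le {c : ℝ} (hc₀ : 0 ≤ c) (hc₁ : c < 1) :
    ∃ C : ℝ, 1 < C ∧ ∀ {n : ℕ} {p : ℝ}, 0 < p → p ≤ 1 → 1 ≤ Real.log n →
      C * Real.log n ≤ n * p →
      erProb n p (fun G => ∃ S : Finset (Fin n), 1 ≤ S.card ∧ S.card ≤ ⌈c / p⌉₊ ∧
        ((outerNeighborFinset G S).card : ℝ) < S.card * (n - S.card) * p / 2) ≤
          2 * ((n : ℝ) ^ 3)⁻¹ := by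
  obtain ⟨δ, hδ, tail_le⟩ := exists_rate_erProb_outerNeighborFinset hc₁
  -- The `4` forces `|S| ≤ n / 2`; the `8 / δ` brings the tail of each `S` below `n ^ (-4 |S|)`.
  refine ⟨4 + 8 / δ, by linarith [div_pos (by norm_num : (0 : ℝ) < 8) hδ], ?_⟩
  intro n p hp₀ hp₁ hlog hnp
  have hn : 0 < n := Nat.pos_of_ne_zero (by rintro rfl; norm_num at hlog)
  have hn₁ : (1 : ℝ) ≤ n := by exact_mod_cast hn
  have hrate : 8 / δ * Real.log n ≤ n * p := by linarith
  have hnp_four : 4 ≤ n * p := by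
    have : 0 ≤ 8 / δ * Real.log n := by positivity
    linarith
  have hlogδ : 2 * (4 : ℕ) * Real.log n ≤ δ * (n * p) :=
    calc 2 * (4 : ℕ) * Real.log n = δ * (8 / δ * Real.log n) := by field_simp; norm_num
      _ ≤ δ * (n * p) := by gcongr
  have inv_pow_four : (n : ℝ) * ((n : ℝ) ^ 4)⁻¹ = ((n : ℝ) ^ 3)⁻¹ := by field_simp
  have union_bound := erProb_exists_nonempty_le hp₀.le hp₁ (r := ((n : ℝ) ^ 4)⁻¹) (by positivity)
    (by rw [inv_pow_four]; exact inv_le_one_of_one_le₀ (one_le_pow₀ hn₁))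
    (s := {S : Finset (Fin n) | S.Nonempty ∧ S.card ≤ ⌈c / p⌉₊})
    (A := fun S G => ((outerNeighborFinset G S).card : ℝ) < S.card * (n - S.card) * p / 2)
    (fun S hS => (Finset.mem_filter.mp hS).2.1) fun S hS => by
      have hS_mul := sub_one_mul_le_of_le_ceil_div hc₀ hp₀ (Finset.mem_filter.mp hS).2.2
      have hS_half : (2 * S.card : ℝ) ≤ n := le_of_mul_le_mul_right (by linarith) hp₀
      exact (tail_le S hp₀.le hp₁ hS_mul).trans
        (exp_neg_le_inv_pow_pow hn hp₀.le hδ.le hS_half hlogδ)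
  simpa only [inv_pow_four, Finset.mem_filter, Finset.mem_univ, true_and, and_assoc,
    Nat.one_le_iff_ne_zero, Finset.card_ne_zero] using union_bound

end Expansion

theorem isLittleO_inv_natCast_pow_inv_natCast_pow {k l : ℕ} (hkl : k < l) :
    (fun n : ℕ => ((n : ℝ) ^ l)⁻¹) =o[atTop] fun n : ℕ => ((n : ℝ) ^ k)⁻¹ := by
  have pow_isLittleO : (fun n : ℕ => (n : ℝ) ^ k) =o[atTop] fun n : ℕ => (n : ℝ) ^ l :=
    (isLittleO_pow_pow_atTop_of_lt hkl).comp_tendsto tendsto_natCast_atTop_atTop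
  refine pow_isLittleO.inv_rev ?_
  filter_upwards [eventually_gt_atTop 0] with n hn hzero
  exact absurd hzero (by positivity)

theorem stmt5_general (c : ℝ) (hc₀ : 0 < c) (hc₁ : c < 1) :
    ∃ C : ℝ, 1 < C ∧ ∀ p : ℕ → ℝ,
      (∀ᶠ n : ℕ in atTop, C * Real.log n / n ≤ p n ∧ p n ≤ 1) →
      (fun n : ℕ => erProb n (p n)
          (fun G => ∃ S : Finset (Fin n),
            1 ≤ S.card ∧ S.card ≤ ⌈c / p n⌉₊ ∧
            (Nat.card {w : Fin n | w ∉ S ∧ ∃ v ∈ S, G.Adj v w} : ℝ) <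
              (S.card : ℝ) * ((n : ℝ) - S.card) * p n / 2))
        =o[atTop] (fun n : ℕ => ((n : ℝ) ^ 2)⁻¹) := by
  obtain ⟨C, hC, erProb_le⟩ := exists_erProb_outerNeighborFinset_lt_le hc₀.le hc₁
  refine ⟨C, hC, fun p hp => ?_⟩
  simp only [natCard_eq_card_outerNeighborFinset]
  refine (IsBigO.of_bound 2 ?_).trans_isLittleO
    (isLittleO_inv_natCast_pow_inv_natCast_pow (by norm_num : 2 < 3))
  have log_ge_one : ∀ᶠ n : ℕ in atTop, 1 ≤ Real.log n :=
    (Real.tendsto_log_atTop.comp tendsto_natCast_atTop_atTop).eventually_ge_atTop 1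
  filter_upwards [hp, log_ge_one, eventually_gt_atTop 0] with n ⟨hpC, hp₁⟩ hlog hn
  have hn₀ : (0 : ℝ) < n := Nat.cast_pos.mpr hn
  have hp₀ : 0 < p n := lt_of_lt_of_le (by positivity) hpC
  rw [Real.norm_of_nonneg (erProb_nonneg hp₀.le hp₁ _), Real.norm_of_nonneg (by positivity)]
  exact erProb_le hp₀ hp₁ hlog (by rwa [div_le_iff₀' hn₀] at hpC)

/-- For every `c ∈ (0,1/2]` there is `C > 1` such that for `C log n / n ≤ p(n) ≤ 1`,
the probability that `G(n, p(n))` contains a vertex set `S` with `1 ≤ |S| ≤ ⌈c/p(n)⌉`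
and `|N(S)| < |S| (n - |S|) p(n) / 2` is `o(n⁻²)`. -/
theorem stmt5 (c : ℝ) (hc₀ : 0 < c) (hc₁ : c ≤ 1/2) :
    ∃ C : ℝ, 1 < C ∧ ∀ p : ℕ → ℝ,
      (∀ᶠ n : ℕ in atTop, C * Real.log n / n ≤ p n ∧ p n ≤ 1) →
      (fun n : ℕ => erProb n (p n)
          (fun G => ∃ S : Finset (Fin n),
            1 ≤ S.card ∧ S.card ≤ ⌈c / p n⌉₊ ∧
            (Nat.card {w : Fin n | w ∉ S ∧ ∃ v ∈ S, G.Adj v w} : ℝ) <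
              (S.card : ℝ) * ((n : ℝ) - S.card) * p n / 2))
        =o[atTop] (fun n : ℕ => ((n : ℝ) ^ 2)⁻¹) := by
  exact stmt5_general c hc₀ (by linarith)
end

section
/- There exist an absolute constant K > 0 and n₀ such that the following holds for every even n ≥ n₀ and every integer d with 3 ≤ d ≤ n/5: for every (n-d)-regular graph X̄ on n vertices, the number m(X̄) of perfect matchings of X̄ is positive and satisfies |log( m(X̄) · (n/2)! · 2^{n/2} / n! ) + (d-1)/2| ≤ K·d²/n. -/
/-!
Write `n` for the number of vertices. Choose a uniformly random perfect matching of a graph all of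
whose degrees are at least `n - d`, and fix an edge `vy`. Switching two matching edges `va`, `yb`
to `vy`, `ab` (and back) is possible for all but a proportion `O(d/n)` of the choices, so `vy` is
in the random matching with probability `1/n + O(d/n²)`. Deleting `vy` from the graph thus changes
the logarithm of the number of perfect matchings by `-1/n + O(d/n²)`. Starting from the complete
graph, which has `n! / ((n/2)! 2^(n/2))` perfect matchings, one reaches an `(n-d)`-regular graph by
deleting `n(d-1)/2` edges, all intermediate graphs having degrees at least `n - d`.
-/

open Finset Function

section switch

variable {V : Type*} [DecidableEq V] {f f' : Equiv.Perm V} {v a w : V}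

/-- The switching of the matching `f` that replaces the edges `{v, f v}` and `{a, f a}` by `{v, a}`
and `{f v, f a}`. -/
def switch (f : Equiv.Perm V) (v a : V) : Equiv.Perm V :=
  Equiv.swap (f v) a * f * Equiv.swap (f v) a

lemma switch_apply_left (hv : v ≠ f v) (hva : v ≠ a) : switch f v a v = a := by
  simp [switch, Equiv.swap_apply_of_ne_of_ne hv hva]

lemma switch_apply_of_ne (h₁ : w ≠ f v) (h₂ : w ≠ a) (h₃ : f w ≠ f v) (h₄ : f w ≠ a) :
    switch f v a w = f w := by
  simp [switch, Equiv.swap_apply_of_ne_of_ne h₁ h₂, Equiv.swap_apply_of_ne_of_ne h₃ h₄]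

lemma eq_of_switch_eq_switch (hv : f v = f' v) (h : switch f v a = switch f' v a) : f = f' := by
  simpa [switch, hv] using h

end switch

lemma adj_sup_edge {V : Type*} {G : SimpleGraph V} {v y : V} (hvy : v ≠ y) :
    (G ⊔ SimpleGraph.edge v y).Adj v y :=
  .inr ((SimpleGraph.edge_adj ..).2 ⟨.inl ⟨rfl, rfl⟩, hvy⟩)

section matchings

/-! ### Perfect matchings as involutions -/

variable {V : Type*} [Fintype V] [DecidableEq V] (G : SimpleGraph V) [DecidableRel G.Adj]

/-- The perfect matchings of `G`, each encoded as the involution of `V` that sends a vertex to its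
partner. -/
def matchingPerms : Finset (Equiv.Perm V) :=
  {f | (∀ v, f (f v) = v) ∧ ∀ v, G.Adj v (f v)}

variable {G} {f : Equiv.Perm V} {v y a b w : V} {W : Finset V} {d : ℕ}

lemma mem_matchingPerms : f ∈ matchingPerms G ↔ Involutive f ∧ ∀ v, G.Adj v (f v) := by
  simp [matchingPerms, Involutive]

/-- The perfect matching of `G` whose edges join each vertex `v` to `f v`. -/
def matchingSubgraph (hf : f ∈ matchingPerms G) : G.Subgraph where
  verts := Set.univ
  Adj v w := f v = w
  adj_sub := by rintro v _ rfl; exact (mem_matchingPerms.1 hf).2 v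
  edge_vert _ := Set.mem_univ _
  symm := ⟨by rintro v _ rfl; exact (mem_matchingPerms.1 hf).1 v⟩

lemma isPerfectMatching_matchingSubgraph (hf : f ∈ matchingPerms G) :
    (matchingSubgraph hf).IsPerfectMatching :=
  SimpleGraph.Subgraph.isPerfectMatching_iff.2 fun v => ⟨f v, rfl, fun _ h => Eq.symm h⟩

lemma exists_matchingSubgraph_eq {M : G.Subgraph} (hM : M.IsPerfectMatching) :
    ∃ (f : Equiv.Perm V) (hf : f ∈ matchingPerms G), matchingSubgraph hf = M := by
  choose g hadj hunique using SimpleGraph.Subgraph.isPerfectMatching_iff.1 hM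
  have hg : Involutive g := fun v => (hunique _ _ (hadj v).symm).symm
  refine ⟨hg.toPerm, mem_matchingPerms.2 ⟨hg, fun v => (hadj v).adj_sub⟩, ?_⟩
  refine SimpleGraph.Subgraph.ext (Set.eq_univ_of_forall hM.2).symm ?_
  ext v w
  exact ⟨fun h => h ▸ hadj v, fun h => (hunique v w h).symm⟩

lemma natCard_isPerfectMatching :
    Nat.card {M : G.Subgraph // M.IsPerfectMatching} = #(matchingPerms G) := by
  let toMatching (f : matchingPerms G) : {M : G.Subgraph // M.IsPerfectMatching} :=
    ⟨matchingSubgraph f.2, isPerfectMatching_matchingSubgraph f.2⟩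
  rw [← Nat.card_eq_finsetCard]
  refine (Nat.card_eq_of_bijective toMatching ⟨fun f f' h => ?_, fun ⟨M, hM⟩ => ?_⟩).symm
  · ext v
    have hadj : (toMatching f).1.Adj v (f'.1 v) := h ▸ rfl
    exact hadj
  · obtain ⟨f, hf, rfl⟩ := exists_matchingSubgraph_eq hM
    exact ⟨⟨f, hf⟩, rfl⟩

/-! ### The complete graph -/

lemma mem_matchingPerms_top_iff_cycleType {k : ℕ} (hk : Fintype.card V = 2 * k) :
    f ∈ matchingPerms (⊤ : SimpleGraph V) ↔ f.cycleType = Multiset.replicate k 2 := by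
  have hinv : Involutive f ↔ f ^ 2 = 1 := by simp [Equiv.ext_iff, pow_two, Involutive]
  have hsupport : (∀ v, v ≠ f v) ↔ f.support = univ := by
    simp [Finset.ext_iff, Equiv.Perm.mem_support, eq_comm]
  have hsum := f.sum_cycleType
  simp only [mem_matchingPerms, SimpleGraph.top_adj, hinv, hsupport]
  constructor
  · rintro ⟨hsq, hfull⟩
    have htwos := Equiv.Perm.cycleType_of_pow_prime_eq_one hsq
    rw [htwos, hfull, card_univ, hk, Multiset.sum_replicate, smul_eq_mul, mul_comm] at hsum
    rw [htwos, Nat.eq_of_mul_eq_mul_left two_pos hsum]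
  · intro htwos
    refine ⟨Equiv.Perm.pow_prime_eq_one_iff.2 fun c hc => ?_, ?_⟩
    · exact Multiset.eq_of_mem_replicate (htwos ▸ hc)
    · rw [← card_eq_iff_eq_univ, ← hsum, htwos, hk, Multiset.sum_replicate, smul_eq_mul, mul_comm]

lemma card_matchingPerms_top {k : ℕ} (hk : Fintype.card V = 2 * k) :
    #(matchingPerms (⊤ : SimpleGraph V)) * (k.factorial * 2 ^ k) = (2 * k).factorial := by
  have hcount := Equiv.Perm.card_of_cycleType_mul_eq V (Multiset.replicate k 2)
  have hsum : (Multiset.replicate k 2).sum = 2 * k := by simp [mul_comm]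
  have hset : ({g | g.cycleType = Multiset.replicate k 2} : Finset (Equiv.Perm V)) =
      matchingPerms ⊤ := by
    ext f
    simp [mem_matchingPerms_top_iff_cycleType hk]
  rw [hset, hk, if_pos ⟨hsum.le, fun _ ha => (Multiset.eq_of_mem_replicate ha).ge⟩, hsum]
    at hcount
  rw [← hcount]
  rcases k.eq_zero_or_pos with rfl | hk0
  · simp
  · simp [Multiset.toFinset_replicate, hk0.ne', mul_comm]

lemma card_matchingPerms_top_pos (heven : Even (Fintype.card V)) :
    0 < #(matchingPerms (⊤ : SimpleGraph V)) := by
  obtain ⟨k, hk⟩ := heven.exists_two_nsmul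
  refine Nat.pos_of_ne_zero fun h => (2 * k).factorial_ne_zero ?_
  rw [← card_matchingPerms_top hk, h, zero_mul]

lemma mul_factorial_mul_two_pow_div_factorial (heven : Even (Fintype.card V)) (m : ℝ) :
    m * ((Fintype.card V / 2).factorial : ℝ) * 2 ^ (Fintype.card V / 2) /
        ((Fintype.card V).factorial : ℝ) =
      m / #(matchingPerms (⊤ : SimpleGraph V)) := by
  obtain ⟨k, hk⟩ := heven.exists_two_nsmul
  have hhalf : Fintype.card V / 2 = k := by lia
  have htop : (#(matchingPerms (⊤ : SimpleGraph V)) * (k.factorial * 2 ^ k) : ℝ) =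
      ((Fintype.card V).factorial : ℝ) := by
    rw [hk]
    exact_mod_cast card_matchingPerms_top hk
  rw [hhalf, ← htop, mul_assoc, mul_div_mul_right _ _ (by positivity)]

/-! ### Switchings -/

lemma switch_mem_matchingPerms (hf : f ∈ matchingPerms G) (hva : G.Adj v a)
    (hfva : G.Adj (f v) (f a)) : switch f v a ∈ matchingPerms G := by
  obtain ⟨hinv, hadj⟩ := mem_matchingPerms.1 hf
  refine mem_matchingPerms.2 ⟨fun w => by simp [switch, hinv (Equiv.swap (f v) a w)], fun w => ?_⟩
  have hv : v ≠ f v := (hadj v).ne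
  have ha : a ≠ f a := (hadj a).ne
  have hfav : f a ≠ f v := hfva.ne'
  by_cases hwv : w = v
  · rwa [hwv, switch_apply_left hv hva.ne]
  by_cases hwfv : w = f v
  · have : switch f v a (f v) = f a := by
      simp [switch, Equiv.swap_apply_of_ne_of_ne hfav ha.symm]
    rwa [hwfv, this]
  by_cases hwa : w = a
  · have : switch f v a a = v := by
      simp [switch, hinv v, Equiv.swap_apply_of_ne_of_ne hv hva.ne]
    rw [hwa, this]
    exact hva.symm
  by_cases hwfa : w = f a
  · have : switch f v a (f a) = f v := by
      simp [switch, hinv a, Equiv.swap_apply_of_ne_of_ne hfav ha.symm]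
    rw [hwfa, this]
    exact hfva.symm
  rw [switch_apply_of_ne hwfv hwa (f.injective.ne hwv) fun h => hwfa (h ▸ (hinv w).symm)]
  exact hadj w

variable (G f v W) in
/-- The admissible choices of `a` in `switch f v a` for a perfect matching `f` of `G`: the result is
again a perfect matching of `G`, and the edges of `f` at vertices of `W` are not switched with
`{v, f v}`. -/
def switchTargets : Finset V :=
  {a | G.Adj v a ∧ G.Adj (f v) (f a) ∧ a ∉ W ∧ a ∉ W.image f}

lemma card_compl_neighborFinset_le (hG : Fintype.card V ≤ G.degree v + d) :
    #(G.neighborFinset v)ᶜ ≤ d := by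
  rw [card_compl, SimpleGraph.card_neighborFinset_eq_degree]
  lia

lemma card_le_card_switchTargets_add (hG : ∀ v, Fintype.card V ≤ G.degree v + d)
    (f : Equiv.Perm V) (v : V) (W : Finset V) :
    Fintype.card V ≤ #(switchTargets G f v W) + 2 * d + 2 * #W := by
  set excluded := (G.neighborFinset v)ᶜ ∪
    ((G.neighborFinset (f v))ᶜ.map f.symm.toEmbedding ∪ (W ∪ W.image f))
  have hcover : (switchTargets G f v W)ᶜ ⊆ excluded := by
    intro a
    simp only [excluded, switchTargets, mem_compl, mem_filter_univ, mem_union,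
      SimpleGraph.mem_neighborFinset, mem_map_equiv, Equiv.symm_symm]
    tauto
  have hexcluded : #excluded ≤ d + (d + (#W + #W)) := by
    refine (card_union_le _ _).trans (add_le_add (card_compl_neighborFinset_le (hG v)) ?_)
    refine (card_union_le _ _).trans (add_le_add ?_ ?_)
    · rw [card_map]
      exact card_compl_neighborFinset_le (hG (f v))
    · exact (card_union_le _ _).trans (Nat.add_le_add_left card_image_le _)
  have hcompl := card_compl_add_card (switchTargets G f v W)
  have := card_le_card hcover
  lia

lemma switch_mem_of_mem_switchTargets (hf : f ∈ matchingPerms G) (ha : a ∈ switchTargets G f v W) :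
    switch f v a ∈ matchingPerms G := by
  simp only [switchTargets, mem_filter_univ] at ha
  exact switch_mem_matchingPerms hf ha.1 ha.2.1

lemma switch_apply_left_of_mem_switchTargets (hf : f ∈ matchingPerms G)
    (ha : a ∈ switchTargets G f v W) : switch f v a v = a := by
  simp only [switchTargets, mem_filter_univ] at ha
  exact switch_apply_left ((mem_matchingPerms.1 hf).2 v).ne ha.1.ne

lemma switch_apply_of_mem_pinned (hf : f ∈ matchingPerms G) (ha : a ∈ switchTargets G f v W)
    (hvW : v ∉ W) (hw : w ∈ W) (hfw : f w ≠ v) : switch f v a w = f w := by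
  simp only [switchTargets, mem_filter_univ] at ha
  obtain ⟨-, -, haW, haW'⟩ := ha
  refine switch_apply_of_ne ?_ ?_ ?_ ?_
  · rintro rfl
    exact hfw ((mem_matchingPerms.1 hf).1 v)
  · exact ne_of_mem_of_not_mem hw haW
  · exact f.injective.ne (ne_of_mem_of_not_mem hw hvW)
  · exact ne_of_mem_of_not_mem (mem_image_of_mem f hw) haW'

lemma card_sigma_switchTargets_le {g : V → V} (hvW : v ∉ W) (hg : ∀ w ∈ W, g w ≠ v) :
    #(({f ∈ matchingPerms G | (∀ w ∈ W, f w = g w) ∧ f v = y} : Finset _).sigma fun f =>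
        switchTargets G f v W) ≤
      #{f ∈ matchingPerms G | ∀ w ∈ W, f w = g w} := by
  set A := {f ∈ matchingPerms G | (∀ w ∈ W, f w = g w) ∧ f v = y}
  refine card_le_card_of_injOn (fun p => switch p.1 v p.2) ?_ ?_
  · rintro ⟨f, a⟩ hp
    obtain ⟨hfA, ha⟩ := mem_sigma.1 hp
    obtain ⟨hf, hfg, -⟩ := mem_filter.1 hfA
    refine mem_filter.2 ⟨switch_mem_of_mem_switchTargets hf ha, fun w hw => ?_⟩
    rw [switch_apply_of_mem_pinned hf ha hvW hw (hfg w hw ▸ hg w hw), hfg w hw]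
  · rintro ⟨f, a⟩ hp ⟨f', a'⟩ hp' (heq : switch f v a = switch f' v a')
    obtain ⟨hfA, ha⟩ : f ∈ A ∧ a ∈ switchTargets G f v W := mem_sigma.1 hp
    obtain ⟨hfA', ha'⟩ : f' ∈ A ∧ a' ∈ switchTargets G f' v W := mem_sigma.1 hp'
    obtain ⟨hf, -, hfv⟩ := mem_filter.1 hfA
    obtain ⟨hf', -, hfv'⟩ := mem_filter.1 hfA'
    obtain rfl : a = a' := by
      rw [← switch_apply_left_of_mem_switchTargets hf ha, heq,
        switch_apply_left_of_mem_switchTargets hf' ha']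
    obtain rfl := eq_of_switch_eq_switch (hfv.trans hfv'.symm) heq
    rfl

lemma card_pinned_edge_mul_le (hG : ∀ v, Fintype.card V ≤ G.degree v + d) (g : V → V)
    (hvW : v ∉ W) (hg : ∀ w ∈ W, g w ≠ v) :
    ((Fintype.card V : ℝ) - 2 * d - 2 * #W) *
        #{f ∈ matchingPerms G | (∀ w ∈ W, f w = g w) ∧ f v = y} ≤
      #{f ∈ matchingPerms G | ∀ w ∈ W, f w = g w} := by
  set A := {f ∈ matchingPerms G | (∀ w ∈ W, f w = g w) ∧ f v = y}
  set B := {f ∈ matchingPerms G | ∀ w ∈ W, f w = g w}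
  have htargets : ∀ f ∈ A, (Fintype.card V : ℝ) - 2 * d - 2 * #W ≤ #(switchTargets G f v W) := by
    intro f _
    have : (Fintype.card V : ℝ) ≤ #(switchTargets G f v W) + 2 * d + 2 * #W := by
      exact_mod_cast card_le_card_switchTargets_add hG f v W
    linarith
  calc ((Fintype.card V : ℝ) - 2 * d - 2 * #W) * #A
      ≤ ∑ f ∈ A, (#(switchTargets G f v W) : ℝ) := by
        rw [mul_comm, ← nsmul_eq_mul]
        exact card_nsmul_le_sum _ _ _ htargets
    _ = #(A.sigma fun f => switchTargets G f v W) := by rw [card_sigma, Nat.cast_sum]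
    _ ≤ #B := by exact_mod_cast card_sigma_switchTargets_le hvW hg

lemma card_edge_mul_le (hG : ∀ v, Fintype.card V ≤ G.degree v + d) (v y : V) :
    ((Fintype.card V : ℝ) - 2 * d) * #{f ∈ matchingPerms G | f v = y} ≤ #(matchingPerms G) := by
  simpa using card_pinned_edge_mul_le (W := ∅) (v := v) (y := y) hG id

lemma card_edge_pair_mul_le (hG : ∀ v, Fintype.card V ≤ G.degree v + d)
    (hd : 2 * d ≤ Fintype.card V) (hyv : y ≠ v) (hay : a ≠ y) :
    ((Fintype.card V : ℝ) - 2 * d) * (Fintype.card V - 2 * d - 2) *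
        #{f ∈ matchingPerms G | f v = a ∧ f y = b} ≤ #(matchingPerms G) := by
  have hd' : (0 : ℝ) ≤ Fintype.card V - 2 * d := sub_nonneg.2 (by exact_mod_cast hd)
  have hpin : ((Fintype.card V : ℝ) - 2 * d - 2) * #{f ∈ matchingPerms G | f v = a ∧ f y = b} ≤
      #{f ∈ matchingPerms G | f v = a} := by
    simpa using card_pinned_edge_mul_le (W := {v}) (v := y) (y := b) hG (fun _ => a)
      (by simpa using hyv) (by simpa using hay)
  rw [mul_assoc]
  exact (mul_le_mul_of_nonneg_left hpin hd').trans (card_edge_mul_le hG v a)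

lemma card_filter_adj_le (hvy : G.Adj v y) :
    #{f ∈ matchingPerms G | G.Adj (f v) (f y)} ≤
      Fintype.card V * #{f ∈ matchingPerms G | f v = y} := by
  rw [← card_univ, ← card_product]
  refine card_le_card_of_injOn (fun f => (f v, switch f v y)) ?_ ?_
  · intro f hf
    obtain ⟨hf, hadj⟩ := mem_filter.1 hf
    refine mem_product.2 ⟨mem_univ _, mem_filter.2 ⟨switch_mem_matchingPerms hf hvy hadj, ?_⟩⟩
    exact switch_apply_left ((mem_matchingPerms.1 hf).2 v).ne hvy.ne
  · intro f _ f' _ heq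
    obtain ⟨hv, hswitch⟩ := Prod.mk.inj heq
    exact eq_of_switch_eq_switch hv hswitch

lemma filter_edge_pair_eq_empty (hvy : G.Adj v y) (hyb : ¬ G.Adj y b) :
    {f ∈ matchingPerms G | f v = y ∧ f y = b} = ∅ := by
  refine filter_eq_empty_iff.2 fun f hf ⟨hfv, hfy⟩ => hyb ?_
  obtain rfl : v = b := by rw [← hfy, ← hfv, (mem_matchingPerms.1 hf).1 v]
  exact hvy.symm

lemma card_filter_not_adj_mul_le (hG : ∀ v, Fintype.card V ≤ G.degree v + d)
    (hd : 2 * d + 2 ≤ Fintype.card V) (hvy : G.Adj v y) :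
    ((Fintype.card V : ℝ) - 2 * d) * (Fintype.card V - 2 * d - 2) *
        #{f ∈ matchingPerms G | ¬ G.Adj (f v) (f y)} ≤
      Fintype.card V * d * #(matchingPerms G) := by
  have hd' : (2 * d + 2 : ℝ) ≤ Fintype.card V := by exact_mod_cast hd
  set c : ℝ := ((Fintype.card V : ℝ) - 2 * d) * (Fintype.card V - 2 * d - 2)
  have hc : 0 ≤ c := mul_nonneg (by linarith) (by linarith)
  let nonadjacent : Finset (Σ _ : V, V) := univ.sigma fun a => (G.neighborFinset a)ᶜ
  have hnonadjacent : #nonadjacent ≤ Fintype.card V * d := by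
    rw [card_sigma, ← card_univ, ← smul_eq_mul]
    exact sum_le_card_nsmul _ _ _ fun a _ => card_compl_neighborFinset_le (hG a)
  have hunion : ({f ∈ matchingPerms G | ¬ G.Adj (f v) (f y)} : Finset _) ⊆
      nonadjacent.biUnion fun p => {f ∈ matchingPerms G | f v = p.1 ∧ f y = p.2} := by
    intro f hf
    obtain ⟨hf, hnadj⟩ := mem_filter.1 hf
    exact mem_biUnion.2 ⟨⟨f v, f y⟩, by simpa [nonadjacent] using hnadj, by simpa using hf⟩
  have hpair : ∀ p ∈ nonadjacent,
      c * #{f ∈ matchingPerms G | f v = p.1 ∧ f y = p.2} ≤ #(matchingPerms G) := by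
    rintro ⟨a, b⟩ hab
    rcases eq_or_ne a y with rfl | hay
    · rw [filter_edge_pair_eq_empty hvy (by simpa [nonadjacent] using hab)]
      simp
    · exact card_edge_pair_mul_le hG (by lia) hvy.ne' hay
  calc c * #{f ∈ matchingPerms G | ¬ G.Adj (f v) (f y)}
      ≤ c * ∑ p ∈ nonadjacent, (#{f ∈ matchingPerms G | f v = p.1 ∧ f y = p.2} : ℝ) := by
        gcongr
        exact_mod_cast (card_le_card hunion).trans card_biUnion_le
    _ ≤ #nonadjacent * #(matchingPerms G) := by
        rw [mul_sum, ← nsmul_eq_mul]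
        exact sum_le_card_nsmul _ _ _ hpair
    _ ≤ Fintype.card V * d * #(matchingPerms G) := by
        gcongr
        exact_mod_cast hnonadjacent

/-! ### The probability of an edge -/

variable (G v y) in
/-- The probability that a uniformly random perfect matching of `G` contains the edge `{v, y}`;
it is `0` if `G` has no perfect matching. -/
noncomputable def edgeProb : ℝ :=
  #{f ∈ matchingPerms G | f v = y} / #(matchingPerms G)

lemma edgeProb_nonneg : 0 ≤ edgeProb G v y := by
  unfold edgeProb
  positivity

lemma edgeProb_mul_le_one (hG : ∀ v, Fintype.card V ≤ G.degree v + d) (v y : V) :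
    (Fintype.card V - 2 * d) * edgeProb G v y ≤ 1 := by
  rw [edgeProb, ← mul_div_assoc]
  exact div_le_one_of_le₀ (card_edge_mul_le hG v y) (Nat.cast_nonneg _)

lemma le_card_mul_edgeProb_add (hG : ∀ v, Fintype.card V ≤ G.degree v + d)
    (hd : 2 * d + 2 ≤ Fintype.card V) (hM : 0 < #(matchingPerms G)) (hvy : G.Adj v y) :
    ((Fintype.card V : ℝ) - 2 * d) * (Fintype.card V - 2 * d - 2) ≤
      (Fintype.card V - 2 * d) * (Fintype.card V - 2 * d - 2) *
        (Fintype.card V * edgeProb G v y) + Fintype.card V * d := by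
  have hd' : (2 * d + 2 : ℝ) ≤ Fintype.card V := by exact_mod_cast hd
  have hM' : (0 : ℝ) < #(matchingPerms G) := by exact_mod_cast hM
  have hbad := card_filter_not_adj_mul_le hG hd hvy
  set c : ℝ := ((Fintype.card V : ℝ) - 2 * d) * (Fintype.card V - 2 * d - 2)
  have hc : 0 ≤ c := mul_nonneg (by linarith) (by linarith)
  have hprob : edgeProb G v y * #(matchingPerms G) = #{f ∈ matchingPerms G | f v = y} :=
    div_mul_cancel₀ _ hM'.ne'
  refine le_of_mul_le_mul_right ?_ hM'
  calc c * #(matchingPerms G)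
      = c * #{f ∈ matchingPerms G | G.Adj (f v) (f y)} +
          c * #{f ∈ matchingPerms G | ¬ G.Adj (f v) (f y)} := by
        rw [← mul_add]
        exact_mod_cast congrArg (c * ·) (congrArg Nat.cast
          (card_filter_add_card_filter_not (s := matchingPerms G) _).symm)
    _ ≤ c * (Fintype.card V * #{f ∈ matchingPerms G | f v = y}) +
          Fintype.card V * d * #(matchingPerms G) := by
        gcongr
        exact_mod_cast card_filter_adj_le hvy
    _ = (c * (Fintype.card V * edgeProb G v y) + Fintype.card V * d) * #(matchingPerms G) := by
        rw [← hprob]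
        ring

/-! ### Adding an edge -/

lemma card_le_degree_sup_edge_add (hG : ∀ w, Fintype.card V ≤ G.degree w + d) (w : V) :
    Fintype.card V ≤ (G ⊔ SimpleGraph.edge v y).degree w + d :=
  (hG w).trans (Nat.add_le_add_right (SimpleGraph.degree_le_of_le le_sup_left) d)

lemma filter_matchingPerms_sup_edge (hvy : Gᶜ.Adj v y) :
    {f ∈ matchingPerms (G ⊔ SimpleGraph.edge v y) | f v ≠ y} = matchingPerms G := by
  ext f
  simp only [mem_filter, mem_matchingPerms, SimpleGraph.sup_adj, SimpleGraph.edge_adj]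
  constructor
  · rintro ⟨⟨hinv, hadj⟩, hfv⟩
    refine ⟨hinv, fun w => (hadj w).resolve_right ?_⟩
    rintro ⟨⟨rfl, h⟩ | ⟨rfl, h⟩, -⟩
    · exact hfv h
    · exact hfv (h ▸ hinv w)
  · rintro ⟨hinv, hadj⟩
    exact ⟨⟨hinv, fun w => .inl (hadj w)⟩, fun hfv => hvy.2 (hfv ▸ hadj v)⟩

lemma card_matchingPerms_eq_one_sub_edgeProb_mul (hvy : Gᶜ.Adj v y)
    (hM : 0 < #(matchingPerms (G ⊔ SimpleGraph.edge v y))) :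
    (#(matchingPerms G) : ℝ) =
      (1 - edgeProb (G ⊔ SimpleGraph.edge v y) v y) *
        #(matchingPerms (G ⊔ SimpleGraph.edge v y)) := by
  have hsplit := card_filter_add_card_filter_not
    (s := matchingPerms (G ⊔ SimpleGraph.edge v y)) (fun f => f v = y)
  rw [filter_matchingPerms_sup_edge hvy] at hsplit
  rw [edgeProb, sub_mul, one_mul, div_mul_cancel₀ _ (by exact_mod_cast hM.ne'), eq_sub_iff_add_eq,
    add_comm]
  exact_mod_cast hsplit

lemma card_edgeFinset_compl_sup_edge (hvy : Gᶜ.Adj v y) :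
    #(G ⊔ SimpleGraph.edge v y)ᶜ.edgeFinset + 1 = #Gᶜ.edgeFinset := by
  have hadd : (G ⊔ SimpleGraph.edge v y)ᶜ ⊔ SimpleGraph.edge v y = Gᶜ := by
    rw [compl_sup, ← sdiff_eq, sdiff_sup_cancel]
    exact (SimpleGraph.edge_le_iff ..).2 (.inr hvy)
  have hnadj : ¬ (G ⊔ SimpleGraph.edge v y)ᶜ.Adj v y := fun h => h.2 (adj_sup_edge hvy.ne)
  rw [← SimpleGraph.card_edgeFinset_sup_edge _ hnadj hvy.ne]
  congr!

end matchings

/-! ### Logarithmic estimates -/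

lemma abs_log_one_sub_add_self_le {p : ℝ} (hp0 : 0 ≤ p) (hp : p ≤ 1 / 2) :
    |Real.log (1 - p) + p| ≤ 2 * p ^ 2 := by
  have habs : |p| = p := abs_of_nonneg hp0
  have htaylor := Real.abs_log_sub_add_sum_range_le (x := p) (by linarith) 1
  simp only [sum_range_one, zero_add, pow_one, Nat.cast_zero, div_one, habs, one_add_one_eq_two]
    at htaylor
  rw [add_comm]
  refine htaylor.trans ?_
  rw [div_le_iff₀ (by linarith)]
  nlinarith [sq_nonneg p]

lemma abs_sub_inv_le_of_switching {n d p : ℝ} (hn : 20 ≤ n) (hd : 0 ≤ d) (hdn : 5 * d ≤ n)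
    (hupper : (n - 2 * d) * p ≤ 1)
    (hlower : (n - 2 * d) * (n - 2 * d - 2) ≤
      (n - 2 * d) * (n - 2 * d - 2) * (n * p) + n * d) :
    |p - 1 / n| ≤ 4 * d / n ^ 2 := by
  have hn0 : 0 < n := by linarith
  have hquad : n ^ 2 / 4 ≤ (n - 2 * d) * (n - 2 * d - 2) := by nlinarith
  have hnp : n * p ≤ 2 := by
    rcases le_or_gt p 0 with hneg | hpos
    · nlinarith
    · nlinarith [mul_le_mul_of_nonneg_right hdn hpos.le]
  have hp_upper : n * (n * p - 1) ≤ 4 * d := calc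
    n * (n * p - 1) ≤ n * (2 * d * p) := by gcongr; linarith
    _ = 2 * d * (n * p) := by ring
    _ ≤ 2 * d * 2 := by gcongr
    _ = 4 * d := by ring
  have hp_lower : n * (1 - n * p) ≤ 4 * d := by
    rcases le_or_gt (1 - n * p) 0 with hneg | hpos
    · nlinarith
    · have hscaled : n * (n * (1 - n * p)) ≤ n * (4 * d) := by
        nlinarith [mul_le_mul_of_nonneg_right hquad hpos.le]
      exact le_of_mul_le_mul_left hscaled hn0
  have hfrac : p - 1 / n = n * (n * p - 1) / n ^ 2 := by field_simp
  rw [hfrac, abs_div, abs_of_pos (pow_pos hn0 2)]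
  gcongr
  exact abs_le'.2 ⟨hp_upper, by linarith⟩

lemma abs_log_one_sub_add_inv_le {n d p : ℝ} (hn : 20 ≤ n) (hd : 1 ≤ d) (hdn : 5 * d ≤ n)
    (hp0 : 0 ≤ p) (hprob : |p - 1 / n| ≤ 4 * d / n ^ 2) :
    p < 1 ∧ |Real.log (1 - p) + 1 / n| ≤ 12 * d / n ^ 2 := by
  have hp : p ≤ 2 / n := calc
    p ≤ 1 / n + 4 * d / n ^ 2 := by linarith [le_of_abs_le hprob]
    _ = (n + 4 * d) / n ^ 2 := by field_simp
    _ ≤ (2 * n) / n ^ 2 := by gcongr; linarith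
    _ = 2 / n := by field_simp
  have hp_half : p ≤ 1 / 2 := hp.trans (by rw [div_le_div_iff₀ (by linarith) two_pos]; linarith)
  refine ⟨by linarith, ?_⟩
  calc |Real.log (1 - p) + 1 / n| = |(Real.log (1 - p) + p) - (p - 1 / n)| := by ring_nf
    _ ≤ |Real.log (1 - p) + p| + |p - 1 / n| := abs_sub _ _
    _ ≤ 2 * (2 / n) ^ 2 + 4 * d / n ^ 2 := by
      gcongr
      exact (abs_log_one_sub_add_self_le hp0 hp_half).trans (by gcongr)
    _ = (8 + 4 * d) / n ^ 2 := by ring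
    _ ≤ 12 * d / n ^ 2 := by gcongr; linarith

section recursion

variable {V : Type*} [Fintype V] [DecidableEq V] {d : ℕ}

lemma abs_log_one_sub_edgeProb_add_inv_le {G : SimpleGraph V} [DecidableRel G.Adj] {v y : V}
    (hG : ∀ v, Fintype.card V ≤ G.degree v + d) (hV : 20 ≤ Fintype.card V)
    (hd : 5 * d ≤ Fintype.card V) (hM : 0 < #(matchingPerms G)) (hvy : G.Adj v y) :
    edgeProb G v y < 1 ∧
      |Real.log (1 - edgeProb G v y) + 1 / Fintype.card V| ≤
        12 * d / (Fintype.card V : ℝ) ^ 2 := by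
  have hd1 : 1 ≤ d := by
    have := hG v
    have := G.degree_lt_card_verts v
    lia
  have hV' : (20 : ℝ) ≤ Fintype.card V := by exact_mod_cast hV
  have hd' : 5 * (d : ℝ) ≤ Fintype.card V := by exact_mod_cast hd
  have hprob := abs_sub_inv_le_of_switching hV' d.cast_nonneg hd'
    (edgeProb_mul_le_one hG v y) (le_card_mul_edgeProb_add hG (by lia) hM hvy)
  exact abs_log_one_sub_add_inv_le hV' (by exact_mod_cast hd1) hd' edgeProb_nonneg hprob

lemma abs_log_card_sub_log_card_sup_edge_add_inv_le {G : SimpleGraph V} [DecidableRel G.Adj]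
    {v y : V} (hG : ∀ v, Fintype.card V ≤ G.degree v + d) (hV : 20 ≤ Fintype.card V)
    (hd : 5 * d ≤ Fintype.card V) (hvy : Gᶜ.Adj v y)
    (hM : 0 < #(matchingPerms (G ⊔ SimpleGraph.edge v y))) :
    0 < #(matchingPerms G) ∧
      |Real.log #(matchingPerms G) - Real.log #(matchingPerms (G ⊔ SimpleGraph.edge v y)) +
          1 / Fintype.card V| ≤ 12 * d / (Fintype.card V : ℝ) ^ 2 := by
  obtain ⟨hlt, hlog⟩ := abs_log_one_sub_edgeProb_add_inv_le (card_le_degree_sup_edge_add hG) hV hd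
    hM (adj_sup_edge hvy.ne)
  have hcard := card_matchingPerms_eq_one_sub_edgeProb_mul hvy hM
  have hM' : (0 : ℝ) < #(matchingPerms (G ⊔ SimpleGraph.edge v y)) := by exact_mod_cast hM
  have hfactor := sub_pos.2 hlt
  refine ⟨by exact_mod_cast hcard ▸ mul_pos hfactor hM', ?_⟩
  rwa [hcard, Real.log_mul hfactor.ne' hM'.ne', add_sub_cancel_right]

lemma abs_log_card_sub_log_card_top_add_le (hV : 20 ≤ Fintype.card V)
    (heven : Even (Fintype.card V)) (hd : 5 * d ≤ Fintype.card V)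
    (G : SimpleGraph V) [DecidableRel G.Adj] (hG : ∀ v, Fintype.card V ≤ G.degree v + d) :
    0 < #(matchingPerms G) ∧
      |Real.log #(matchingPerms G) - Real.log #(matchingPerms (⊤ : SimpleGraph V)) +
          #Gᶜ.edgeFinset / Fintype.card V| ≤
        #Gᶜ.edgeFinset * (12 * d / (Fintype.card V : ℝ) ^ 2) := by
  induction hk : #Gᶜ.edgeFinset generalizing G with
  | zero =>
    have htop : G = ⊤ := by
      rw [card_eq_zero, SimpleGraph.edgeFinset_eq_empty] at hk
      exact compl_eq_bot.1 hk
    have hperms : matchingPerms G = matchingPerms ⊤ := by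
      ext f
      simp [mem_matchingPerms, htop]
    simpa [hperms] using card_matchingPerms_top_pos heven
  | succ k ih =>
    obtain ⟨⟨v, y⟩, he⟩ : Gᶜ.edgeFinset.Nonempty := card_pos.1 (by lia)
    have hvy : Gᶜ.Adj v y := SimpleGraph.mem_edgeFinset.1 he
    have hk' : #(G ⊔ SimpleGraph.edge v y)ᶜ.edgeFinset = k := by
      have := card_edgeFinset_compl_sup_edge hvy
      lia
    obtain ⟨hM, hrest⟩ := ih (G ⊔ SimpleGraph.edge v y) (card_le_degree_sup_edge_add hG) hk'
    obtain ⟨hpos, hstep⟩ := abs_log_card_sub_log_card_sup_edge_add_inv_le hG hV hd hvy hM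
    refine ⟨hpos, ?_⟩
    calc |Real.log #(matchingPerms G) - Real.log #(matchingPerms ⊤) +
          ((k + 1 : ℕ) : ℝ) / Fintype.card V|
        = |(Real.log #(matchingPerms G) - Real.log #(matchingPerms (G ⊔ SimpleGraph.edge v y)) +
              1 / Fintype.card V) +
            (Real.log #(matchingPerms (G ⊔ SimpleGraph.edge v y)) -
              Real.log #(matchingPerms ⊤) + k / Fintype.card V)| := by
          push_cast
          ring_nf
      _ ≤ 12 * d / (Fintype.card V : ℝ) ^ 2 + k * (12 * d / (Fintype.card V : ℝ) ^ 2) :=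
          (abs_add_le _ _).trans (add_le_add hstep hrest)
      _ = (k + 1 : ℕ) * (12 * d / (Fintype.card V : ℝ) ^ 2) := by
          push_cast
          ring

lemma two_mul_card_edgeFinset_compl_le (G : SimpleGraph V) [DecidableRel G.Adj]
    (hG : ∀ v, Fintype.card V ≤ G.degree v + d) :
    2 * #Gᶜ.edgeFinset ≤ Fintype.card V * d := by
  rw [← SimpleGraph.sum_degrees_eq_twice_card_edges, ← card_univ, ← smul_eq_mul]
  refine sum_le_card_nsmul _ _ _ fun v _ => ?_
  have := hG v
  rw [SimpleGraph.degree_compl]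
  lia

lemma card_edgeFinset_compl_div_card [Nonempty V] (G : SimpleGraph V) [DecidableRel G.Adj]
    (hG : ∀ v, G.degree v + d = Fintype.card V) :
    (#Gᶜ.edgeFinset : ℝ) / Fintype.card V = ((d : ℝ) - 1) / 2 := by
  have hdegree (v : V) : (Gᶜ.degree v : ℝ) = d - 1 := by
    rw [eq_sub_iff_add_eq]
    have := hG v
    have := G.degree_lt_card_verts v
    have := G.degree_compl v
    exact_mod_cast (by lia : Gᶜ.degree v + 1 = d)
  have hsum : (∑ v, (Gᶜ.degree v : ℝ)) = 2 * #Gᶜ.edgeFinset := by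
    exact_mod_cast Gᶜ.sum_degrees_eq_twice_card_edges
  simp only [hdegree, sum_const, card_univ, nsmul_eq_mul] at hsum
  rw [div_eq_div_iff (by simp) two_ne_zero]
  linarith

theorem stmt7_general (hV : 20 ≤ Fintype.card V) (heven : Even (Fintype.card V))
    (hd : 5 * d ≤ Fintype.card V) (G : SimpleGraph V) [DecidableRel G.Adj]
    (hG : ∀ v, Fintype.card V ≤ G.degree v + d) :
    0 < Nat.card {M : G.Subgraph // M.IsPerfectMatching} ∧
      |Real.log ((Nat.card {M : G.Subgraph // M.IsPerfectMatching} : ℝ) *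
            (Nat.factorial (Fintype.card V / 2) : ℝ) * 2 ^ (Fintype.card V / 2) /
            (Nat.factorial (Fintype.card V) : ℝ)) +
          #Gᶜ.edgeFinset / Fintype.card V|
        ≤ 6 * (d : ℝ) ^ 2 / Fintype.card V := by
  obtain ⟨hpos, hlog⟩ := abs_log_card_sub_log_card_top_add_le hV heven hd G hG
  have hedges : (2 * #Gᶜ.edgeFinset : ℝ) ≤ Fintype.card V * d := by
    exact_mod_cast two_mul_card_edgeFinset_compl_le G hG
  rw [natCard_isPerfectMatching, mul_factorial_mul_two_pow_div_factorial heven,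
    Real.log_div (by exact_mod_cast hpos.ne')
      (by exact_mod_cast (card_matchingPerms_top_pos heven).ne')]
  refine ⟨hpos, hlog.trans ?_⟩
  calc (#Gᶜ.edgeFinset : ℝ) * (12 * d / (Fintype.card V : ℝ) ^ 2)
      = 2 * #Gᶜ.edgeFinset * (6 * d / (Fintype.card V : ℝ) ^ 2) := by ring
    _ ≤ Fintype.card V * d * (6 * d / (Fintype.card V : ℝ) ^ 2) := by gcongr
    _ = 6 * (d : ℝ) ^ 2 / Fintype.card V := by
      have : (Fintype.card V : ℝ) ≠ 0 := by exact_mod_cast (by lia : Fintype.card V ≠ 0)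
      field_simp

end recursion

/-- There is an absolute constant `K > 0` such that for every large even `n` and every
`3 ≤ d ≤ n/5`, every `(n-d)`-regular graph `X̄` on `n` vertices has a positive number
`m(X̄)` of perfect matchings, and
`|log(m(X̄) (n/2)! 2^{n/2} / n!) + (d-1)/2| ≤ K d² / n`. -/
theorem stmt7 :
    ∃ K : ℝ, 0 < K ∧ ∃ n₀ : ℕ, ∀ n : ℕ, n₀ ≤ n → Even n →
      ∀ d : ℕ, 3 ≤ d → d ≤ n / 5 →
        ∀ X : SimpleGraph (Fin n), (∀ v, Nat.card (X.neighborSet v) = n - d) →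
          0 < Nat.card {M : X.Subgraph // M.IsPerfectMatching} ∧
          |Real.log ((Nat.card {M : X.Subgraph // M.IsPerfectMatching} : ℝ) *
                (Nat.factorial (n / 2) : ℝ) * 2 ^ (n / 2) / (Nat.factorial n : ℝ)) +
              ((d : ℝ) - 1) / 2|
            ≤ K * (d : ℝ) ^ 2 / n := by
  classical
  refine ⟨6, by norm_num, 20, fun n hn heven d _ hd X hX => ?_⟩
  have hdeg (v : Fin n) : X.degree v + d = Fintype.card (Fin n) := by
    rw [← SimpleGraph.card_neighborSet_eq_degree, ← Nat.card_eq_fintype_card, hX v,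
      Fintype.card_fin]
    lia
  have : NeZero n := ⟨by lia⟩
  rw [← card_edgeFinset_compl_div_card X hdeg]
  simpa using stmt7_general (by simpa using hn) (by simpa using heven) (by simpa using by lia) X
    fun v => (hdeg v).ge
end

section
/- There exists a sequence ε_n → 0 such that the following holds for every even n, every integer d with 4 ≤ d ≤ n-1 and d³ ≤ n, every k ∈ {1,…,d}, every set of colour indices 1 ≤ i_1 < … < i_k ≤ d, and every family A of k-tuples of pairwise edge-disjoint perfect matchings of K_n: writing π for the map sending a d-tuple (M_1,…,M_d) ∈ 𝒢''_d(n) to the k-tuple (M_{i_1},…,M_{i_k}), one has (1-ε_n)·P(G''(n,k) ∈ A) ≤ P(π(G''(n,d)) ∈ A) ≤ (1+ε_n)·P(G''(n,k) ∈ A). -/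
/-- `M` is an ordered `d`-tuple of pairwise edge-disjoint perfect matchings of `K_n`
(each matching being viewed as a 1-regular simple graph on `[n]`). -/
def IsPMTuple {n d : ℕ} (M : Fin d → SimpleGraph (Fin n)) : Prop :=
  (∀ i, ∀ v, Nat.card ((M i).neighborSet v) = 1) ∧
  ∀ i j, i ≠ j → Disjoint (M i) (M j)

open Classical in
/-- Probability that `G''(n,d)`, the uniformly random ordered `d`-tuple of pairwise
edge-disjoint perfect matchings of `K_n`, satisfies the property `A`. -/
noncomputable def tupleProb (n d : ℕ) (A : (Fin d → SimpleGraph (Fin n)) → Prop) : ℝ :=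
  ((Finset.univ.filter (fun M : Fin d → SimpleGraph (Fin n) =>
      IsPMTuple M ∧ A M)).card : ℝ) /
  ((Finset.univ.filter (fun M : Fin d → SimpleGraph (Fin n) => IsPMTuple M)).card : ℝ)

/-!
Deleting the last matching of a uniform `(j+1)`-tuple leaves a `j`-tuple weighted by the number of
perfect matchings of the complement of its union, a `j`-regular graph. So it suffices that this
number changes by a factor of at most `exp (O(j³ / n²))` from one `j`-regular graph to another;
multiplying over the at most `d` steps gives `exp (O(d⁴ / n²))`, which tends to `1` when `d³ ≤ n`.

By Godsil's formula the number of perfect matchings of the complement of `G` is the integral of the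
matching polynomial of `G` against the standard Gaussian. For `|x| ≥ √n / 4` the matching
polynomials of two `j`-regular graphs are compared through their logarithmic derivatives, which are
sums of ratios `μ(G - v) / μ(G)`: unfolding the recurrence for these ratios, they agree with those
of a tree depending only on `j` up to an error of relative order `(j / x²)³`. The range
`|x| ≤ √n / 4` contributes an exponentially small proportion of the integral.
-/

open Finset Polynomial MeasureTheory ProbabilityTheory Filter Topology

section Matchings

variable {V : Type*} {G M : SimpleGraph V} {S : Finset V} {v w : V}

/-- `M` is a matching of `G` whose edges lie inside `S`. As for the members of `IsPMTuple`, a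
matching is represented by the graph on all of `V` that has exactly the edges of the matching. -/
structure IsMatchingOn (G : SimpleGraph V) (S : Finset V) (M : SimpleGraph V) : Prop where
  le : M ≤ G
  mem_of_adj : ∀ ⦃v w⦄, M.Adj v w → v ∈ S
  eq_of_adj : ∀ ⦃v w w'⦄, M.Adj v w → M.Adj v w' → w = w'

open Classical in
/-- The vertices of `S` that are not covered by the matching `M`. -/
noncomputable def unmatched (S : Finset V) (M : SimpleGraph V) : Finset V :=
  {v ∈ S | ∀ w, ¬ M.Adj v w}

lemma mem_unmatched : v ∈ unmatched S M ↔ v ∈ S ∧ ∀ w, ¬ M.Adj v w := by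
  simp [unmatched]

lemma unmatched_subset : unmatched S M ⊆ S :=
  fun _ h ↦ (mem_unmatched.1 h).1

section Edge

variable [DecidableEq V]

lemma unmatched_erase : unmatched (S.erase v) M = (unmatched S M).erase v := by
  ext u
  simp only [mem_unmatched, mem_erase, and_assoc]

lemma isMatchingOn_erase_iff :
    IsMatchingOn G (S.erase v) M ↔ IsMatchingOn G S M ∧ ∀ w, ¬ M.Adj v w where
  mp h := ⟨⟨h.le, fun _ _ hab ↦ mem_of_mem_erase (h.mem_of_adj hab), h.eq_of_adj⟩,
    fun _ hvw ↦ notMem_erase v S (h.mem_of_adj hvw)⟩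
  mpr h := ⟨h.1.le, fun a b hab ↦ mem_erase.2 ⟨by rintro rfl; exact h.2 b hab, h.1.mem_of_adj hab⟩,
    h.1.eq_of_adj⟩

lemma IsMatchingOn.sdiff_edge (hM : IsMatchingOn G S M) (hvw : M.Adj v w) :
    IsMatchingOn G ((S.erase v).erase w) (M \ SimpleGraph.edge v w) where
  le := sdiff_le.trans hM.le
  mem_of_adj a b hab := by
    have hv : ∀ ⦃z⦄, M.Adj v z → z = w := fun z hz ↦ hM.eq_of_adj hz hvw
    have hw : ∀ ⦃z⦄, M.Adj w z → z = v := fun z hz ↦ hM.eq_of_adj hz hvw.symm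
    have haS := hM.mem_of_adj hab.1
    have hne := hab.1.ne
    simp only [SimpleGraph.sdiff_adj, SimpleGraph.edge_adj] at hab
    grind
  eq_of_adj _ _ _ hab hac := hM.eq_of_adj hab.1 hac.1

lemma IsMatchingOn.sup_edge (hM : IsMatchingOn G ((S.erase v).erase w) M) (hv : v ∈ S)
    (hw : w ∈ S) (hvw : G.Adj v w) : IsMatchingOn G S (M ⊔ SimpleGraph.edge v w) where
  le := sup_le hM.le ((SimpleGraph.edge_le_iff _).2 (Or.inr hvw))
  mem_of_adj a b hab := by
    have haS := @hM.mem_of_adj a b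
    simp only [SimpleGraph.sup_adj, SimpleGraph.edge_adj] at hab
    grind
  eq_of_adj a b c hab hac := by
    have haS := hM.mem_of_adj
    have hbc := @hM.eq_of_adj a b c
    simp only [SimpleGraph.sup_adj, SimpleGraph.edge_adj] at hab hac
    grind

lemma IsMatchingOn.not_adj_of_erase_erase (hM : IsMatchingOn G ((S.erase v).erase w) M) :
    ¬ M.Adj v w := fun h ↦ by
  simpa using hM.mem_of_adj h

lemma unmatched_sup_edge (S : Finset V) (M : SimpleGraph V) (hvw : v ≠ w) :
    unmatched S (M ⊔ SimpleGraph.edge v w) = unmatched ((S.erase v).erase w) M := by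
  ext a
  simp only [mem_unmatched, SimpleGraph.sup_adj, SimpleGraph.edge_adj, mem_erase]
  refine ⟨fun ⟨haS, ha⟩ ↦ ?_, fun ⟨⟨haw, hav, haS⟩, ha⟩ ↦ ⟨haS, fun b ↦ ?_⟩⟩
  · have hav := ha w
    have haw := ha v
    grind
  · have hab := ha b
    grind

end Edge

variable [Fintype V]

open Classical in
/-- The set of all matchings of `G` inside `S`. -/
noncomputable def matchings (G : SimpleGraph V) (S : Finset V) : Finset (SimpleGraph V) :=
  {M | IsMatchingOn G S M}

lemma mem_matchings : M ∈ matchings G S ↔ IsMatchingOn G S M := by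
  simp [matchings]

lemma matchings_empty (G : SimpleGraph V) : matchings G ∅ = {⊥} := by
  ext M
  rw [mem_matchings, mem_singleton]
  refine ⟨fun h ↦ ?_, ?_⟩
  · ext a b
    simpa using fun hab ↦ notMem_empty a (h.mem_of_adj hab)
  · rintro rfl
    exact ⟨bot_le, by simp, by simp⟩

open Classical in
lemma filter_matchings_covered (G : SimpleGraph V) (S : Finset V) (v : V) :
    {M ∈ matchings G S | ¬ ∀ w, ¬ M.Adj v w} =
      {w ∈ S | G.Adj v w}.biUnion fun w ↦ {M ∈ matchings G S | M.Adj v w} := by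
  ext M
  simp only [mem_filter, mem_biUnion, mem_matchings, not_forall, not_not]
  exact ⟨fun ⟨hM, w, hw⟩ ↦ ⟨w, ⟨hM.mem_of_adj hw.symm, hM.le hw⟩, hM, hw⟩,
    fun ⟨w, _, hM, hw⟩ ↦ ⟨hM, w, hw⟩⟩

/-- The number of perfect matchings of the subgraph of `G` induced on `S`. -/
noncomputable def perfectMatchingCount (G : SimpleGraph V) (S : Finset V) : ℕ :=
  #{M ∈ matchings G S | #(unmatched S M) = 0}

/-- The matching polynomial `∑ (-1)^r X^(|S| - 2r)` of the subgraph of `G` induced on `S`, summed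
over its matchings, with `r` the number of edges. The exponent is the number of unmatched vertices,
so that `r` is half the number of matched ones. -/
noncomputable def matchingPoly (G : SimpleGraph V) (S : Finset V) : ℝ[X] :=
  ∑ M ∈ matchings G S, (-1) ^ ((#S - #(unmatched S M)) / 2) * X ^ #(unmatched S M)

lemma perfectMatchingCount_empty (G : SimpleGraph V) : perfectMatchingCount G ∅ = 1 := by
  simp [perfectMatchingCount, matchings_empty, unmatched]

lemma matchingPoly_empty (G : SimpleGraph V) : matchingPoly G ∅ = 1 := by
  simp [matchingPoly, matchings_empty, unmatched]

variable [DecidableEq V]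

section Recurrence

variable {R : Type*} [AddCommMonoid R]

open Classical in
lemma sum_matchings_filter_adj (f : Finset V → R) (hv : v ∈ S) (hw : w ∈ S) (hvw : G.Adj v w) :
    ∑ M ∈ matchings G S with M.Adj v w, f (unmatched S M) =
      ∑ M ∈ matchings G ((S.erase v).erase w), f (unmatched ((S.erase v).erase w) M) := by
  refine sum_nbij' (· \ SimpleGraph.edge v w) (· ⊔ SimpleGraph.edge v w) ?_ ?_ ?_ ?_ ?_
  · simp only [mem_filter, mem_matchings]
    exact fun M hM ↦ hM.1.sdiff_edge hM.2
  · simp only [mem_filter, mem_matchings]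
    exact fun M hM ↦ ⟨hM.sup_edge hv hw hvw, Or.inr (by simp [SimpleGraph.edge_adj, hvw.ne])⟩
  · simp only [mem_filter]
    exact fun M hM ↦ sdiff_sup_cancel ((SimpleGraph.edge_le_iff _).2 (Or.inr hM.2))
  · simp only [mem_matchings]
    exact fun M hM ↦ by
      rw [sup_sdiff_right_self, SimpleGraph.sdiff_edge _ hM.not_adj_of_erase_erase]
  · simp only [mem_filter, mem_matchings]
    intro M hM
    rw [← unmatched_sup_edge _ _ hvw.ne,
      sdiff_sup_cancel ((SimpleGraph.edge_le_iff _).2 (Or.inr hM.2))]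

open Classical in
lemma filter_matchings_isolated (G : SimpleGraph V) (S : Finset V) (v : V) :
    {M ∈ matchings G S | ∀ w, ¬ M.Adj v w} = matchings G (S.erase v) := by
  ext M
  rw [mem_filter, mem_matchings, mem_matchings, isMatchingOn_erase_iff]

lemma sum_matchings [DecidableRel G.Adj] (f : Finset V → R) (hv : v ∈ S) :
    ∑ M ∈ matchings G S, f (unmatched S M) =
      ∑ M ∈ matchings G (S.erase v), f (insert v (unmatched (S.erase v) M)) +
      ∑ w ∈ S with G.Adj v w, ∑ M ∈ matchings G ((S.erase v).erase w),
        f (unmatched ((S.erase v).erase w) M) := by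
  classical
  rw [← sum_filter_add_sum_filter_not _ (fun M : SimpleGraph V ↦ ∀ w, ¬ M.Adj v w),
    filter_matchings_isolated, filter_matchings_covered, sum_biUnion]
  · congr 1
    · refine sum_congr rfl fun M hM ↦ ?_
      have hvM := (isMatchingOn_erase_iff.1 (mem_matchings.1 hM)).2
      rw [unmatched_erase, insert_erase (mem_unmatched.2 ⟨hv, hvM⟩)]
    · refine sum_congr (by congr!) fun w hw ↦ ?_
      rw [mem_filter] at hw
      exact sum_matchings_filter_adj f hv hw.1 hw.2
  · intro w _ w' _ hww'
    refine disjoint_left.2 fun M hM hM' ↦ hww' ?_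
    rw [mem_filter, mem_matchings] at hM hM'
    exact hM.1.eq_of_adj hM.2 hM'.2

end Recurrence

lemma perfectMatchingCount_eq_sum [DecidableRel G.Adj] (hv : v ∈ S) :
    perfectMatchingCount G S =
      ∑ w ∈ S with G.Adj v w, perfectMatchingCount G ((S.erase v).erase w) := by
  simp only [perfectMatchingCount, card_filter]
  rw [sum_matchings (fun U ↦ if #U = 0 then 1 else 0) hv]
  simp

lemma matchingPoly_eq_sub_sum [DecidableRel G.Adj] (hv : v ∈ S) :
    matchingPoly G S = X * matchingPoly G (S.erase v) -
      ∑ w ∈ S with G.Adj v w, matchingPoly G ((S.erase v).erase w) := by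
  rw [matchingPoly, sum_matchings (fun U ↦ (-1) ^ ((#S - #U) / 2) * (X : ℝ[X]) ^ #U) hv,
    sub_eq_add_neg, ← sum_neg_distrib, matchingPoly, mul_sum]
  congr 1
  · refine sum_congr rfl fun M _ ↦ ?_
    have hvU : v ∉ unmatched (S.erase v) M := fun h ↦ notMem_erase v S (unmatched_subset h)
    rw [card_insert_of_notMem hvU, ← card_erase_add_one hv, Nat.add_sub_add_right, pow_succ]
    ring
  · refine sum_congr rfl fun w hw ↦ ?_
    rw [mem_filter] at hw
    rw [matchingPoly, ← sum_neg_distrib]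
    refine sum_congr rfl fun M _ ↦ ?_
    have hcard : #S = #((S.erase v).erase w) + 2 := by
      rw [← card_erase_add_one hv, ← card_erase_add_one (mem_erase.2 ⟨hw.2.ne', hw.1⟩)]
    have hU : #(unmatched ((S.erase v).erase w) M) ≤ #((S.erase v).erase w) :=
      card_le_card unmatched_subset
    rw [hcard, Nat.sub_add_comm hU, Nat.add_div_right _ two_pos, pow_succ]
    ring

lemma derivative_matchingPoly (G : SimpleGraph V) (S : Finset V) :
    derivative (matchingPoly G S) = ∑ v ∈ S, matchingPoly G (S.erase v) := by
  have hterm : ∀ M, derivative ((-1 : ℝ[X]) ^ ((#S - #(unmatched S M)) / 2) *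
      X ^ #(unmatched S M)) = ∑ v ∈ unmatched S M,
      (-1) ^ ((#(S.erase v) - #(unmatched (S.erase v) M)) / 2) *
        X ^ #(unmatched (S.erase v) M) := fun M ↦ by
    have hcard : ∀ v ∈ unmatched S M, (-1 : ℝ[X]) ^
        ((#(S.erase v) - #(unmatched (S.erase v) M)) / 2) * X ^ #(unmatched (S.erase v) M) =
        (-1) ^ ((#S - #(unmatched S M)) / 2) * X ^ (#(unmatched S M) - 1) := fun v hv ↦ by
      rw [← card_erase_add_one (unmatched_subset hv), ← card_erase_add_one hv, unmatched_erase,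
        Nat.add_sub_add_right, Nat.add_sub_cancel]
    have hsign : ((-1 : ℝ[X])) = C (-1) := by simp
    rw [sum_congr rfl hcard, sum_const, hsign, ← C_pow, derivative_C_mul, derivative_X_pow]
    simp [mul_left_comm]
  simp only [matchingPoly, derivative_sum]
  rw [sum_congr rfl fun M _ ↦ hterm M]
  refine sum_comm' fun M v ↦ ?_
  rw [mem_matchings, mem_matchings, isMatchingOn_erase_iff, mem_unmatched]
  tauto

end Matchings

section Gaussian

lemma integrable_eval_gaussianReal (p : ℝ[X]) (μ : ℝ) (σ : NNReal) :
    Integrable (fun x ↦ p.eval x) (gaussianReal μ σ) := by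
  induction p using Polynomial.induction_on' with
  | add p q hp hq => simpa only [eval_add] using! hp.add hq
  | monomial n a =>
    have hn : Integrable (fun x ↦ id x ^ n) (gaussianReal μ σ) :=
      integrable_pow_of_mem_interior_integrableExpSet (by simp) n
    simpa only [eval_monomial, id] using hn.const_mul a

lemma integrable_gaussianPDFReal_mul_eval (p : ℝ[X]) :
    Integrable fun x ↦ gaussianPDFReal 0 1 x * p.eval x := by
  have h := integrable_eval_gaussianReal p 0 1
  rw [gaussianReal_of_var_ne_zero 0 one_ne_zero, integrable_withDensity_iff_integrable_smul'
    (measurable_gaussianPDF 0 1) (ae_of_all _ fun _ ↦ gaussianPDF_lt_top)] at h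
  simpa only [toReal_gaussianPDF, smul_eq_mul] using h

lemma hasDerivAt_gaussianPDFReal (x : ℝ) :
    HasDerivAt (gaussianPDFReal 0 1) (-x * gaussianPDFReal 0 1 x) x := by
  have h := ((hasDerivAt_pow 2 x).neg.div_const 2).exp.const_mul (√(2 * Real.pi))⁻¹
  simp only [gaussianPDFReal_def, sub_zero, NNReal.coe_one, mul_one]
  refine h.congr_deriv ?_
  simp only [Pi.neg_apply, Nat.cast_ofNat]
  ring

/-- Stein's identity. -/
lemma integral_eval_X_mul_gaussianReal (p : ℝ[X]) :
    ∫ x, (X * p).eval x ∂gaussianReal 0 1 = ∫ x, (derivative p).eval x ∂gaussianReal 0 1 := by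
  have hderiv : ∀ x, HasDerivAt (fun x ↦ gaussianPDFReal 0 1 x * p.eval x)
      (gaussianPDFReal 0 1 x * (derivative p - X * p).eval x) x := fun x ↦ by
    refine ((hasDerivAt_gaussianPDFReal x).mul (p.hasDerivAt x)).congr_deriv ?_
    rw [eval_sub, eval_mul, eval_X]
    ring
  have hzero : ∫ x, (derivative p - X * p).eval x ∂gaussianReal 0 1 = 0 := by
    rw [integral_gaussianReal_eq_integral_smul one_ne_zero]
    exact integral_eq_zero_of_hasDerivAt_of_integrable hderiv
      (integrable_gaussianPDFReal_mul_eval _) (integrable_gaussianPDFReal_mul_eval _)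
  simp only [eval_sub] at hzero
  rw [integral_sub (integrable_eval_gaussianReal _ 0 1) (integrable_eval_gaussianReal _ 0 1)]
    at hzero
  exact (sub_eq_zero.1 hzero).symm

/-- Godsil's formula. -/
theorem integral_matchingPoly_gaussianReal {V : Type*} [Fintype V] (G : SimpleGraph V)
    (S : Finset V) :
    ∫ x, (matchingPoly G S).eval x ∂gaussianReal 0 1 = perfectMatchingCount Gᶜ S := by
  classical
  induction S using Finset.strongInduction with | H S ih =>
  rcases S.eq_empty_or_nonempty with rfl | ⟨v, hv⟩
  · simp [matchingPoly_empty, perfectMatchingCount_empty]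
  have hint := fun p : ℝ[X] ↦ integrable_eval_gaussianReal p 0 1
  have hsub : ∀ w, (S.erase v).erase w ⊂ S := fun w ↦
    (erase_subset _ _).trans_ssubset (erase_ssubset hv)
  have hsplit : ∑ w ∈ S.erase v, (perfectMatchingCount Gᶜ ((S.erase v).erase w) : ℝ) =
      ∑ w ∈ S with G.Adj v w, (perfectMatchingCount Gᶜ ((S.erase v).erase w) : ℝ) +
      ∑ w ∈ S with Gᶜ.Adj v w, (perfectMatchingCount Gᶜ ((S.erase v).erase w) : ℝ) := by
    rw [← sum_filter_add_sum_filter_not (S.erase v) (G.Adj v)]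
    congr 2 <;> ext w <;> simp only [mem_filter, mem_erase, SimpleGraph.compl_adj]
    · exact ⟨fun h ↦ ⟨h.1.2, h.2⟩, fun h ↦ ⟨⟨h.2.ne', h.1⟩, h.2⟩⟩
    · tauto
  calc ∫ x, (matchingPoly G S).eval x ∂gaussianReal 0 1
      = ∫ x, (derivative (matchingPoly G (S.erase v))).eval x ∂gaussianReal 0 1 -
        ∑ w ∈ S with G.Adj v w,
          ∫ x, (matchingPoly G ((S.erase v).erase w)).eval x ∂gaussianReal 0 1 := by
        rw [← integral_eval_X_mul_gaussianReal, ← integral_finsetSum _ fun _ _ ↦ hint _,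
          ← integral_sub (hint _) (integrable_finsetSum _ fun _ _ ↦ hint _),
          matchingPoly_eq_sub_sum hv]
        simp only [eval_sub, eval_finsetSum]
    _ = ∑ w ∈ S.erase v, (perfectMatchingCount Gᶜ ((S.erase v).erase w) : ℝ) -
        ∑ w ∈ S with G.Adj v w, (perfectMatchingCount Gᶜ ((S.erase v).erase w) : ℝ) := by
        simp only [derivative_matchingPoly, eval_finsetSum]
        rw [integral_finsetSum _ fun _ _ ↦ hint _]
        simp only [ih _ (hsub _)]
    _ = perfectMatchingCount Gᶜ S := by
        rw [hsplit, add_sub_cancel_left, perfectMatchingCount_eq_sum hv, Nat.cast_sum]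

lemma exp_div_three_le_gaussianReal_real_Icc {s : ℝ} (hs : 0 ≤ s) :
    Real.exp (-(s + 1) ^ 2 / 2) / 3 ≤ (gaussianReal 0 1).real (Set.Icc s (s + 1)) := by
  have hsqrt : √(2 * Real.pi) ≤ 3 := by
    rw [Real.sqrt_le_left (by norm_num)]
    linarith [Real.pi_le_four]
  have hpdf : ∀ x ∈ Set.Icc s (s + 1),
      Real.exp (-(s + 1) ^ 2 / 2) / 3 ≤ gaussianPDFReal 0 1 x := fun x hx ↦ by
    simp only [gaussianPDFReal, sub_zero, NNReal.coe_one, mul_one]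
    rw [div_eq_inv_mul]
    have : x ^ 2 ≤ (s + 1) ^ 2 := pow_le_pow_left₀ (hs.trans hx.1) hx.2 2
    gcongr
  have hint : IntegrableOn (gaussianPDFReal 0 1) (Set.Icc s (s + 1)) :=
    (integrable_gaussianPDFReal 0 1).integrableOn
  rw [measureReal_def, gaussianReal_apply_eq_integral 0 one_ne_zero, ENNReal.toReal_ofReal
    (integral_nonneg fun _ ↦ gaussianPDFReal_nonneg 0 1 _)]
  simpa using setIntegral_ge_of_const_le_real measurableSet_Icc (by simp) hpdf hint

end Gaussian

section EvalBounds

variable {V : Type*} [Fintype V] {G : SimpleGraph V} [DecidableRel G.Adj]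
  {S : Finset V} {v : V} {j : ℕ} {x : ℝ}

lemma eval_matchingPoly_eq_sub_sum [DecidableEq V] (hv : v ∈ S) (x : ℝ) :
    (matchingPoly G S).eval x = x * (matchingPoly G (S.erase v)).eval x -
      ∑ w ∈ S with G.Adj v w, (matchingPoly G ((S.erase v).erase w)).eval x := by
  rw [matchingPoly_eq_sub_sum hv, eval_sub, eval_mul, eval_X, eval_finsetSum]

lemma eval_neg_matchingPoly (G : SimpleGraph V) (S : Finset V) (x : ℝ) :
    (matchingPoly G S).eval (-x) = (-1) ^ #S * (matchingPoly G S).eval x := by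
  classical
  induction S using Finset.strongInduction with | H S ih =>
  rcases S.eq_empty_or_nonempty with rfl | ⟨v, hv⟩
  · simp [matchingPoly_empty]
  rw [eval_matchingPoly_eq_sub_sum hv, eval_matchingPoly_eq_sub_sum hv,
    ih _ (erase_ssubset hv), mul_sub, mul_sum]
  congr 1
  · rw [← card_erase_add_one hv]
    ring
  · refine sum_congr rfl fun w hw ↦ ?_
    rw [mem_filter] at hw
    rw [ih _ ((erase_subset _ _).trans_ssubset (erase_ssubset hv)), ← card_erase_add_one hv,
      ← card_erase_add_one (mem_erase.2 ⟨hw.2.ne', hw.1⟩)]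
    ring

lemma eval_abs_matchingPoly (G : SimpleGraph V) (hS : Even #S) (x : ℝ) :
    (matchingPoly G S).eval |x| = (matchingPoly G S).eval x := by
  rcases abs_choice x with hx | hx
  · rw [hx]
  · rw [hx, eval_neg_matchingPoly, hS.neg_one_pow, one_mul]

lemma sum_filter_adj_le (hG : ∀ v, G.degree v ≤ j) {f : V → ℝ} {b : ℝ} (hb : 0 ≤ b)
    (hf : ∀ w ∈ S, G.Adj v w → f w ≤ b) : ∑ w ∈ S with G.Adj v w, f w ≤ j * b := by
  have hcard : #{w ∈ S | G.Adj v w} ≤ j := by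
    refine (card_le_card fun w hw ↦ ?_).trans (hG v)
    simpa using (mem_filter.1 hw).2
  calc ∑ w ∈ S with G.Adj v w, f w ≤ #{w ∈ S | G.Adj v w} • b :=
        sum_le_card_nsmul _ _ _ fun w hw ↦ hf w (mem_filter.1 hw).1 (mem_filter.1 hw).2
    _ ≤ j * b := by
        rw [nsmul_eq_mul]
        gcongr

lemma abs_sum_filter_adj_sub_le (hG : ∀ v, G.degree v ≤ j) {f : V → ℝ} {t δ : ℝ} (hδ : 0 ≤ δ)
    (hf : ∀ w ∈ S, G.Adj v w → |f w - t| ≤ δ) :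
    |∑ w ∈ S with G.Adj v w, f w - #{w ∈ S | G.Adj v w} * t| ≤ j * δ := by
  rw [← nsmul_eq_mul, ← sum_const, ← sum_sub_distrib]
  exact (abs_sum_le_sum_abs _ _).trans (sum_filter_adj_le hG hδ hf)

lemma abs_eval_matchingPoly_le (hG : ∀ v, G.degree v ≤ j) {a : ℝ} (ha : 0 < a) (hx : |x| ≤ a)
    (S : Finset V) : |(matchingPoly G S).eval x| ≤ (a + j / a) ^ #S := by
  classical
  induction S using Finset.strongInduction with | H S ih =>
  rcases S.eq_empty_or_nonempty with rfl | ⟨v, hv⟩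
  · simp [matchingPoly_empty]
  have hterm : ∀ w ∈ S, G.Adj v w →
      |(matchingPoly G ((S.erase v).erase w)).eval x| ≤ (a + j / a) ^ #(S.erase v) / a := by
    intro w hw hvw
    refine (ih _ ((erase_subset _ _).trans_ssubset (erase_ssubset hv))).trans ?_
    rw [le_div_iff₀ ha, ← card_erase_add_one (mem_erase.2 ⟨hvw.ne', hw⟩), pow_succ]
    gcongr
    exact le_add_of_nonneg_right (by positivity)
  calc |(matchingPoly G S).eval x|
      ≤ |x| * |(matchingPoly G (S.erase v)).eval x| +
        ∑ w ∈ S with G.Adj v w, |(matchingPoly G ((S.erase v).erase w)).eval x| := by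
        rw [eval_matchingPoly_eq_sub_sum hv, ← abs_mul]
        exact (abs_sub _ _).trans (add_le_add_right (abs_sum_le_sum_abs _ _) _)
    _ ≤ a * (a + j / a) ^ #(S.erase v) + j * ((a + j / a) ^ #(S.erase v) / a) := by
        gcongr
        · exact ih _ (erase_ssubset hv)
        · exact sum_filter_adj_le hG (by positivity) hterm
    _ = (a + j / a) ^ #S := by
        rw [← card_erase_add_one hv, pow_succ]
        ring

lemma two_mul_div_le_half (hx : 0 < x) (hj : 4 * j ≤ x ^ 2) : 2 * j / x ≤ x / 2 := by
  rw [div_le_div_iff₀ hx two_pos]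
  linarith

lemma eval_matchingPoly_pos_and_half_mul_le [DecidableEq V] (hG : ∀ v, G.degree v ≤ j)
    (hx : 0 < x) (hj : 4 * j ≤ x ^ 2) (S : Finset V) :
    0 < (matchingPoly G S).eval x ∧
      ∀ v ∈ S, x / 2 * (matchingPoly G (S.erase v)).eval x ≤ (matchingPoly G S).eval x := by
  induction S using Finset.strongInduction with | H S ih =>
  have hhalf : ∀ v ∈ S,
      x / 2 * (matchingPoly G (S.erase v)).eval x ≤ (matchingPoly G S).eval x := fun v hv ↦ by
    obtain ⟨hpos, hle⟩ := ih _ (erase_ssubset hv)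
    have hsum : ∑ w ∈ S with G.Adj v w, (matchingPoly G ((S.erase v).erase w)).eval x ≤
        j * (2 / x * (matchingPoly G (S.erase v)).eval x) := by
      refine sum_filter_adj_le hG (by positivity) fun w hw hvw ↦ ?_
      have hww := hle w (mem_erase.2 ⟨hvw.ne', hw⟩)
      rw [div_mul_eq_mul_div, le_div_iff₀ hx]
      linarith
    have hcoef := mul_le_mul_of_nonneg_right (two_mul_div_le_half hx hj) hpos.le
    rw [eval_matchingPoly_eq_sub_sum hv]
    linear_combination hsum + hcoef
  refine ⟨?_, hhalf⟩
  rcases S.eq_empty_or_nonempty with rfl | ⟨v, hv⟩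
  · simp [matchingPoly_empty]
  · exact (mul_pos (half_pos hx) (ih _ (erase_ssubset hv)).1).trans_le (hhalf v hv)

lemma eval_matchingPoly_pos (hG : ∀ v, G.degree v ≤ j) (hx : 0 < x) (hj : 4 * j ≤ x ^ 2)
    (S : Finset V) : 0 < (matchingPoly G S).eval x := by
  classical
  exact (eval_matchingPoly_pos_and_half_mul_le hG hx hj S).1

lemma eval_matchingPoly_erase_le [DecidableEq V] (hG : ∀ v, G.degree v ≤ j) (hx : 0 < x)
    (hj : 4 * j ≤ x ^ 2) (hv : v ∈ S) :
    (matchingPoly G (S.erase v)).eval x ≤ 2 / x * (matchingPoly G S).eval x := by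
  have h := (eval_matchingPoly_pos_and_half_mul_le hG hx hj S).2 v hv
  rw [div_mul_eq_mul_div, le_div_iff₀ hx]
  linarith

lemma eval_matchingPoly_le_mul_erase [DecidableEq V] (hG : ∀ v, G.degree v ≤ j) (hx : 0 < x)
    (hj : 4 * j ≤ x ^ 2) (hv : v ∈ S) :
    (matchingPoly G S).eval x ≤ x * (matchingPoly G (S.erase v)).eval x := by
  rw [eval_matchingPoly_eq_sub_sum hv]
  exact sub_le_self _ (sum_nonneg fun w _ ↦ (eval_matchingPoly_pos hG hx hj _).le)

lemma sub_mul_eval_matchingPoly_erase_le [DecidableEq V] (hG : ∀ v, G.degree v ≤ j)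
    (hx : 0 < x) (hj : 4 * j ≤ x ^ 2) (hv : v ∈ S) :
    (x - 2 * j / x) * (matchingPoly G (S.erase v)).eval x ≤ (matchingPoly G S).eval x := by
  have hsum : ∑ w ∈ S with G.Adj v w, (matchingPoly G ((S.erase v).erase w)).eval x ≤
      j * (2 / x * (matchingPoly G (S.erase v)).eval x) :=
    sum_filter_adj_le hG (mul_nonneg (by positivity) (eval_matchingPoly_pos hG hx hj _).le)
      fun w hw hvw ↦ eval_matchingPoly_erase_le hG hx hj (mem_erase.2 ⟨hvw.ne', hw⟩)
  rw [eval_matchingPoly_eq_sub_sum hv]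
  linear_combination hsum

lemma eval_matchingPoly_le_pow (hG : ∀ v, G.degree v ≤ j) (hx : 0 < x) (hj : 4 * j ≤ x ^ 2)
    (S : Finset V) : (matchingPoly G S).eval x ≤ x ^ #S := by
  classical
  induction S using Finset.strongInduction with | H S ih =>
  rcases S.eq_empty_or_nonempty with rfl | ⟨v, hv⟩
  · simp [matchingPoly_empty]
  rw [← card_erase_add_one hv, pow_succ']
  exact (eval_matchingPoly_le_mul_erase hG hx hj hv).trans
    (mul_le_mul_of_nonneg_left (ih _ (erase_ssubset hv)) hx.le)

lemma sub_pow_le_eval_matchingPoly (hG : ∀ v, G.degree v ≤ j) (hx : 0 < x) (hj : 4 * j ≤ x ^ 2)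
    (S : Finset V) : (x - 2 * j / x) ^ #S ≤ (matchingPoly G S).eval x := by
  classical
  induction S using Finset.strongInduction with | H S ih =>
  rcases S.eq_empty_or_nonempty with rfl | ⟨v, hv⟩
  · simp [matchingPoly_empty]
  have hnonneg : 0 ≤ x - 2 * j / x := by linarith [two_mul_div_le_half hx hj]
  rw [← card_erase_add_one hv, pow_succ']
  exact (mul_le_mul_of_nonneg_left (ih _ (erase_ssubset hv)) hnonneg).trans
    (sub_mul_eval_matchingPoly_erase_le hG hx hj hv)

end EvalBounds

section Ratio

variable {V : Type*} [Fintype V] [DecidableEq V] {G : SimpleGraph V} [DecidableRel G.Adj]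
  {S : Finset V} {v w : V} {j : ℕ} {x : ℝ}

/-- The ratio of the matching polynomials of `G[S] - v` and `G[S]` at `x`. Summed over `v ∈ S` it
gives the logarithmic derivative of the matching polynomial of `G[S]`. -/
noncomputable def vertexRatio (G : SimpleGraph V) (x : ℝ) (S : Finset V) (v : V) : ℝ :=
  (matchingPoly G (S.erase v)).eval x / (matchingPoly G S).eval x

lemma vertexRatio_nonneg (hG : ∀ v, G.degree v ≤ j) (hx : 0 < x) (hj : 4 * j ≤ x ^ 2) :
    0 ≤ vertexRatio G x S v :=
  div_nonneg (eval_matchingPoly_pos hG hx hj _).le (eval_matchingPoly_pos hG hx hj _).le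

lemma vertexRatio_le_two_div (hG : ∀ v, G.degree v ≤ j) (hx : 0 < x) (hj : 4 * j ≤ x ^ 2)
    (hv : v ∈ S) : vertexRatio G x S v ≤ 2 / x := by
  rw [vertexRatio, div_le_iff₀ (eval_matchingPoly_pos hG hx hj _)]
  exact eval_matchingPoly_erase_le hG hx hj hv

lemma vertexRatio_eq_one_div (hG : ∀ v, G.degree v ≤ j) (hx : 0 < x) (hj : 4 * j ≤ x ^ 2)
    (hv : v ∈ S) : vertexRatio G x S v =
      1 / (x - ∑ w ∈ S with G.Adj v w, vertexRatio G x (S.erase v) w) := by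
  have hpos := eval_matchingPoly_pos hG hx hj (S.erase v)
  simp only [vertexRatio, ← sum_div]
  rw [eval_matchingPoly_eq_sub_sum hv, ← one_div_div, sub_div, mul_div_cancel_right₀ _ hpos.ne']

lemma sum_vertexRatio_le (hG : ∀ v, G.degree v ≤ j) (hx : 0 < x) (hj : 4 * j ≤ x ^ 2) :
    ∑ w ∈ S with G.Adj v w, vertexRatio G x (S.erase v) w ≤ 2 * j / x := by
  calc ∑ w ∈ S with G.Adj v w, vertexRatio G x (S.erase v) w ≤ j * (2 / x) :=
        sum_filter_adj_le hG (by positivity) fun w hw hvw ↦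
          vertexRatio_le_two_div hG hx hj (mem_erase.2 ⟨hvw.ne', hw⟩)
    _ = 2 * j / x := by ring

lemma abs_one_div_sub_sub_one_div_sub_le {s t δ : ℝ} (hx : 0 < x) (hs : s ≤ x / 2)
    (ht : t ≤ x / 2) (h : |s - t| ≤ δ) : |1 / (x - s) - 1 / (x - t)| ≤ 4 * δ / x ^ 2 := by
  have hs' : x / 2 ≤ x - s := by linarith
  have ht' : x / 2 ≤ x - t := by linarith
  have hs_pos : 0 < x - s := (half_pos hx).trans_le hs'
  have ht_pos : 0 < x - t := (half_pos hx).trans_le ht'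
  calc |1 / (x - s) - 1 / (x - t)| = |s - t| / ((x - s) * (x - t)) := by
        rw [div_sub_div _ _ hs_pos.ne' ht_pos.ne', abs_div, abs_of_pos (mul_pos hs_pos ht_pos)]
        ring_nf
    _ ≤ δ / (x / 2 * (x / 2)) := by
        have hδ : 0 ≤ δ := (abs_nonneg _).trans h
        gcongr
    _ = 4 * δ / x ^ 2 := by
        field_simp
        norm_num

/-- Each application of the recurrence for the ratios gains a factor of order `j / x ^ 2`. -/
lemma abs_vertexRatio_sub_one_div_le (hG : ∀ v, G.degree v ≤ j) (hx : 0 < x) (hj : 4 * j ≤ x ^ 2)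
    (hv : v ∈ S) {t δ : ℝ} (ht : t ≤ x / 2)
    (hsum : |∑ w ∈ S with G.Adj v w, vertexRatio G x (S.erase v) w - t| ≤ δ) :
    |vertexRatio G x S v - 1 / (x - t)| ≤ 4 * δ / x ^ 2 := by
  rw [vertexRatio_eq_one_div hG hx hj hv]
  exact abs_one_div_sub_sub_one_div_sub_le hx
    ((sum_vertexRatio_le hG hx hj).trans (two_mul_div_le_half hx hj)) ht hsum

lemma abs_vertexRatio_sub_inv_le (hG : ∀ v, G.degree v ≤ j) (hx : 0 < x) (hj : 4 * j ≤ x ^ 2)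
    (hv : v ∈ S) : |vertexRatio G x S v - 1 / x| ≤ 8 * j / x ^ 3 := by
  have hsum : |∑ w ∈ S with G.Adj v w, vertexRatio G x (S.erase v) w - 0| ≤ 2 * j / x := by
    rw [sub_zero, abs_of_nonneg (sum_nonneg fun _ _ ↦ vertexRatio_nonneg hG hx hj)]
    exact sum_vertexRatio_le hG hx hj
  calc |vertexRatio G x S v - 1 / x| ≤ 4 * (2 * j / x) / x ^ 2 := by
        simpa using abs_vertexRatio_sub_one_div_le hG hx hj hv (half_pos hx).le hsum
    _ = 8 * j / x ^ 3 := by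
        ring

lemma sub_one_div_le_half (hx : 0 < x) (hj : 4 * j ≤ x ^ 2) : ((j : ℝ) - 1) / x ≤ x / 2 := by
  rw [div_le_div_iff₀ hx two_pos]
  linarith [Nat.cast_nonneg (α := ℝ) j]

lemma div_sub_div_le_half (hx : 0 < x) (hj : 4 * j ≤ x ^ 2) :
    j / (x - ((j : ℝ) - 1) / x) ≤ x / 2 := by
  have hden : x / 2 ≤ x - ((j : ℝ) - 1) / x := by linarith [sub_one_div_le_half hx hj]
  calc j / (x - ((j : ℝ) - 1) / x) ≤ j / (x / 2) := by gcongr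
    _ = 2 * j / x := by ring
    _ ≤ x / 2 := two_mul_div_le_half hx hj

lemma abs_vertexRatio_erase_sub_le (hG : G.IsRegularOfDegree j) (hx : 0 < x)
    (hj : 4 * j ≤ x ^ 2) (hvw : G.Adj v w) :
    |vertexRatio G x (univ.erase v) w - 1 / (x - ((j : ℝ) - 1) / x)| ≤ 32 * j ^ 2 / x ^ 5 := by
  have hcard : (#{u ∈ univ.erase v | G.Adj w u} : ℝ) = j - 1 := by
    rw [filter_erase, ← SimpleGraph.neighborFinset_eq_filter, eq_sub_iff_add_eq]
    exact_mod_cast (card_erase_add_one ((G.mem_neighborFinset w v).2 hvw.symm)).trans (hG w)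
  have hsum := abs_sum_filter_adj_sub_le (S := univ.erase v) (fun v ↦ (hG v).le)
    (by positivity) fun u hu hwu ↦ abs_vertexRatio_sub_inv_le (fun v ↦ (hG v).le) hx hj
      (S := (univ.erase v).erase w) (mem_erase.2 ⟨hwu.ne', hu⟩)
  rw [hcard, mul_one_div] at hsum
  calc |vertexRatio G x (univ.erase v) w - 1 / (x - ((j : ℝ) - 1) / x)|
      ≤ 4 * (j * (8 * j / x ^ 3)) / x ^ 2 :=
        abs_vertexRatio_sub_one_div_le (fun v ↦ (hG v).le) hx hj (by simp [hvw.ne'])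
          (sub_one_div_le_half hx hj) hsum
    _ = 32 * j ^ 2 / x ^ 5 := by
        ring

/-- The value of `vertexRatio` at the root of the tree of depth two whose root has `j` children,
each of which has `j - 1` children. -/
noncomputable def treeRatio (j : ℕ) (x : ℝ) : ℝ :=
  1 / (x - j / (x - ((j : ℝ) - 1) / x))

lemma abs_vertexRatio_univ_sub_treeRatio_le (hG : G.IsRegularOfDegree j) (hx : 0 < x)
    (hj : 4 * j ≤ x ^ 2) (v : V) :
    |vertexRatio G x univ v - treeRatio j x| ≤ 128 * j ^ 3 / x ^ 7 := by
  have hcard : #{w | G.Adj v w} = j := by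
    rw [← SimpleGraph.neighborFinset_eq_filter]
    exact hG v
  have hsum := abs_sum_filter_adj_sub_le (S := univ) (v := v) (fun v ↦ (hG v).le)
    (by positivity) fun w _ hvw ↦ abs_vertexRatio_erase_sub_le hG hx hj hvw
  rw [hcard, mul_one_div] at hsum
  calc |vertexRatio G x univ v - treeRatio j x| ≤ 4 * (j * (32 * j ^ 2 / x ^ 5)) / x ^ 2 :=
        abs_vertexRatio_sub_one_div_le (fun v ↦ (hG v).le) hx hj (mem_univ v)
          (div_sub_div_le_half hx hj) hsum
    _ = 128 * j ^ 3 / x ^ 7 := by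
        ring

end Ratio

section Comparison

variable {V : Type*} [Fintype V] {G G' : SimpleGraph V} [DecidableRel G.Adj] [DecidableRel G'.Adj]
  {S : Finset V} {j : ℕ} {x : ℝ}

lemma hasDerivAt_log_eval_matchingPoly [DecidableEq V] (hG : ∀ v, G.degree v ≤ j) (hx : 0 < x)
    (hj : 4 * j ≤ x ^ 2) (S : Finset V) :
    HasDerivAt (fun y ↦ Real.log ((matchingPoly G S).eval y)) (∑ v ∈ S, vertexRatio G x S v) x := by
  have h := ((matchingPoly G S).hasDerivAt x).log (eval_matchingPoly_pos hG hx hj S).ne'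
  rwa [derivative_matchingPoly, eval_finsetSum, sum_div] at h

lemma tendsto_eval_matchingPoly_div_pow (hG : ∀ v, G.degree v ≤ j) (S : Finset V) :
    Tendsto (fun y ↦ (matchingPoly G S).eval y / y ^ #S) atTop (𝓝 1) := by
  have hlower : Tendsto (fun y : ℝ ↦ (1 - 2 * j / y ^ 2) ^ #S) atTop (𝓝 1) := by
    have h : Tendsto (fun y : ℝ ↦ 1 - 2 * j / y ^ 2) atTop (𝓝 (1 - 0)) :=
      tendsto_const_nhds.sub (tendsto_const_nhds.div_atTop (tendsto_pow_atTop two_ne_zero))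
    simpa using h.pow #S
  have hlarge : ∀ᶠ y : ℝ in atTop, 0 < y ∧ 4 * j ≤ y ^ 2 :=
    (eventually_gt_atTop 0).and ((tendsto_pow_atTop two_ne_zero).eventually_ge_atTop _)
  refine tendsto_of_tendsto_of_tendsto_of_le_of_le' hlower tendsto_const_nhds ?_ ?_ <;>
    filter_upwards [hlarge] with y ⟨hy, hjy⟩
  · have hfactor : (1 - 2 * j / y ^ 2) * y = y - 2 * j / y := by field_simp
    rw [le_div_iff₀ (by positivity), ← mul_pow, hfactor]
    exact sub_pow_le_eval_matchingPoly hG hy hjy S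
  · rw [div_le_one (by positivity)]
    exact eval_matchingPoly_le_pow hG hy hjy S

lemma tendsto_log_eval_matchingPoly_sub (hG : ∀ v, G.degree v ≤ j) (hG' : ∀ v, G'.degree v ≤ j)
    (S : Finset V) :
    Tendsto (fun y ↦ Real.log ((matchingPoly G S).eval y) -
      Real.log ((matchingPoly G' S).eval y)) atTop (𝓝 0) := by
  have h := ((tendsto_eval_matchingPoly_div_pow hG S).div
    (tendsto_eval_matchingPoly_div_pow hG' S) one_ne_zero).log (by norm_num)
  rw [div_one, Real.log_one] at h
  refine h.congr' ?_
  filter_upwards [eventually_gt_atTop 0,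
    (tendsto_pow_atTop two_ne_zero).eventually_ge_atTop (4 * (j : ℝ))] with y hy hjy
  rw [Pi.div_apply, div_div_div_cancel_right₀ (by positivity), Real.log_div
    (eval_matchingPoly_pos hG hy hjy S).ne' (eval_matchingPoly_pos hG' hy hjy S).ne']

lemma nonneg_of_hasDerivAt_nonpos_of_tendsto {f f' : ℝ → ℝ}
    (hf : ∀ y ∈ Set.Ici x, HasDerivAt f (f' y) y) (hf' : ∀ y ∈ Set.Ici x, f' y ≤ 0)
    (hlim : Tendsto f atTop (𝓝 0)) : 0 ≤ f x := by
  have hanti : AntitoneOn f (Set.Ici x) :=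
    antitoneOn_of_hasDerivWithinAt_nonpos (convex_Ici x)
      (fun y hy ↦ (hf y hy).continuousAt.continuousWithinAt)
      (fun y hy ↦ (hf y (interior_subset hy)).hasDerivWithinAt)
      fun y hy ↦ hf' y (interior_subset hy)
  refine le_of_tendsto hlim ?_
  filter_upwards [eventually_ge_atTop x] with y hy
  exact hanti Set.self_mem_Ici hy hy

lemma sum_vertexRatio_sub_sum_vertexRatio_le [DecidableEq V] (hG : G.IsRegularOfDegree j)
    (hG' : G'.IsRegularOfDegree j) (hx : 0 < x) (hj : 4 * j ≤ x ^ 2) :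
    ∑ v, vertexRatio G x univ v - ∑ v, vertexRatio G' x univ v ≤
      256 * Fintype.card V * j ^ 3 / x ^ 7 := by
  rw [← sum_sub_distrib]
  calc ∑ v, (vertexRatio G x univ v - vertexRatio G' x univ v)
      ≤ ∑ _v : V, 256 * j ^ 3 / x ^ 7 := sum_le_sum fun v _ ↦ by
        have h := abs_le.1 (abs_vertexRatio_univ_sub_treeRatio_le hG hx hj v)
        have h' := abs_le.1 (abs_vertexRatio_univ_sub_treeRatio_le hG' hx hj v)
        linear_combination h.2 + h'.1
    _ = 256 * Fintype.card V * j ^ 3 / x ^ 7 := by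
        rw [sum_const, nsmul_eq_mul, card_univ]
        ring

/-- Both polynomials are monic of the same degree, so their quotient tends to `1` and is controlled
by integrating the difference of the logarithmic derivatives over `[x, ∞)`. -/
theorem eval_matchingPoly_univ_le_exp_mul (hG : G.IsRegularOfDegree j)
    (hG' : G'.IsRegularOfDegree j) (hx : 0 < x) (hj : 4 * j ≤ x ^ 2) :
    (matchingPoly G' univ).eval x ≤
      Real.exp (43 * Fintype.card V * j ^ 3 / x ^ 6) * (matchingPoly G univ).eval x := by
  classical
  have hdeg : ∀ v, G.degree v ≤ j := fun v ↦ (hG v).le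
  have hdeg' : ∀ v, G'.degree v ≤ j := fun v ↦ (hG' v).le
  set K : ℝ := 43 * Fintype.card V * j ^ 3 with hK
  have hIci : ∀ y ∈ Set.Ici x, 0 < y ∧ 4 * j ≤ y ^ 2 := fun y hy ↦
    ⟨hx.trans_le hy, hj.trans (pow_le_pow_left₀ hx.le hy 2)⟩
  have hnonneg : 0 ≤ Real.log ((matchingPoly G univ).eval x) -
      Real.log ((matchingPoly G' univ).eval x) + K / x ^ 6 := by
    refine nonneg_of_hasDerivAt_nonpos_of_tendsto
      (f := fun y ↦ Real.log ((matchingPoly G univ).eval y) -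
        Real.log ((matchingPoly G' univ).eval y) + K / y ^ 6)
      (f' := fun y ↦ ∑ v, vertexRatio G y univ v - ∑ v, vertexRatio G' y univ v - 6 * K / y ^ 7)
      (fun y hy ↦ ?_) (fun y hy ↦ ?_) ?_
    · obtain ⟨hy0, hjy⟩ := hIci y hy
      have hpow : HasDerivAt (fun y ↦ K / y ^ 6) (-(6 * K / y ^ 7)) y := by
        refine ((hasDerivAt_const y K).div (hasDerivAt_pow 6 y) (by positivity)).congr_deriv ?_
        field_simp
        ring
      exact ((hasDerivAt_log_eval_matchingPoly hdeg hy0 hjy univ).sub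
        (hasDerivAt_log_eval_matchingPoly hdeg' hy0 hjy univ)).add hpow
    · obtain ⟨hy0, hjy⟩ := hIci y hy
      have hK_nonneg : 0 ≤ (Fintype.card V * j ^ 3 : ℝ) / y ^ 7 := by positivity
      rw [hK]
      linear_combination sum_vertexRatio_sub_sum_vertexRatio_le hG hG' hy0 hjy + 2 * hK_nonneg
    · simpa using (tendsto_log_eval_matchingPoly_sub hdeg hdeg' univ).add
        (tendsto_const_nhds (x := K).div_atTop (tendsto_pow_atTop (by norm_num : 6 ≠ 0)))
  have hpos := eval_matchingPoly_pos hdeg hx hj univ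
  have hpos' := eval_matchingPoly_pos hdeg' hx hj univ
  rw [← Real.log_le_log_iff hpos' (by positivity), Real.log_mul (by positivity) hpos.ne',
    Real.log_exp]
  linarith

end Comparison

section Count

variable {V : Type*} [Fintype V] {G G' : SimpleGraph V} [DecidableRel G.Adj] [DecidableRel G'.Adj]
  {j n : ℕ} {x : ℝ}

lemma abs_eval_matchingPoly_univ_le (hV : Fintype.card V = n) (hn : 0 < n)
    (hG : ∀ v, G.degree v ≤ j) (hj : 80 * j ≤ n) (hx : |x| ≤ √n / 4) :
    |(matchingPoly G univ).eval x| ≤ (3 / 10 * √n) ^ n := by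
  have hsq : √(n : ℝ) ^ 2 = n := Real.sq_sqrt n.cast_nonneg
  have hjR : 80 * (j : ℝ) ≤ √n ^ 2 := by
    rw [hsq]
    exact_mod_cast hj
  have hdiv : j / (√(n : ℝ) / 4) ≤ √n / 20 := by
    rw [div_le_iff₀ (by positivity)]
    linear_combination hjR / 80
  refine (abs_eval_matchingPoly_le hG (by positivity) hx univ).trans ?_
  rw [card_univ, hV]
  exact pow_le_pow_left₀ (by positivity) (by linarith) n

lemma four_mul_le_sq_of_sqrt_le_abs (hj : 80 * j ≤ n) (hx : √n / 4 ≤ |x|) : 4 * j ≤ |x| ^ 2 := by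
  have hsq : √(n : ℝ) ^ 2 = n := Real.sq_sqrt n.cast_nonneg
  have hjR : 80 * (j : ℝ) ≤ n := by exact_mod_cast hj
  have hx2 : (√n / 4) ^ 2 ≤ |x| ^ 2 := pow_le_pow_left₀ (by positivity) hx 2
  linear_combination hjR / 20 + hx2 - hsq / 16 + (1 / 80 : ℝ) * n.cast_nonneg (α := ℝ)

lemma eval_matchingPoly_univ_pos (hV : Fintype.card V = n) (hn : 0 < n) (hn_even : Even n)
    (hG : ∀ v, G.degree v ≤ j) (hj : 80 * j ≤ n) (hx : √n / 4 ≤ |x|) :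
    0 < (matchingPoly G univ).eval x := by
  rw [← eval_abs_matchingPoly G (by rwa [card_univ, hV])]
  exact eval_matchingPoly_pos hG (lt_of_lt_of_le (by positivity) hx)
    (four_mul_le_sq_of_sqrt_le_abs hj hx) univ

lemma eval_matchingPoly_univ_le_exp_mul_of_sqrt_le_abs (hV : Fintype.card V = n) (hn : 0 < n)
    (hn_even : Even n) (hG : G.IsRegularOfDegree j) (hG' : G'.IsRegularOfDegree j)
    (hj : 80 * j ≤ n) (hx : √n / 4 ≤ |x|) :
    (matchingPoly G univ).eval x ≤
      Real.exp (176128 * j ^ 3 / n ^ 2) * (matchingPoly G' univ).eval x := by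
  have hpos := eval_matchingPoly_univ_pos hV hn hn_even (fun v ↦ (hG' v).le) hj hx
  have hx0 : 0 < |x| := lt_of_lt_of_le (by positivity) hx
  have hsix : (√n / 4) ^ 6 = (n : ℝ) ^ 3 / 4096 := by
    rw [div_pow, pow_mul' √(n : ℝ) 3 2, Real.sq_sqrt n.cast_nonneg]
    norm_num
  -- `176128 = 43 * 4 ^ 6`
  have hexp : 43 * n * j ^ 3 / |x| ^ 6 ≤ 176128 * (j : ℝ) ^ 3 / n ^ 2 :=
    calc 43 * n * j ^ 3 / |x| ^ 6 ≤ 43 * n * j ^ 3 / (√n / 4) ^ 6 := by gcongr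
      _ = 176128 * (j : ℝ) ^ 3 / n ^ 2 := by
        rw [hsix]
        field_simp
        ring
  have h := eval_matchingPoly_univ_le_exp_mul hG' hG hx0 (four_mul_le_sq_of_sqrt_le_abs hj hx)
  have hcard : Even #(univ : Finset V) := by rwa [card_univ, hV]
  rw [eval_abs_matchingPoly _ hcard, eval_abs_matchingPoly _ hcard, hV] at h
  exact h.trans (mul_le_mul_of_nonneg_right (Real.exp_le_exp.2 hexp) hpos.le)

lemma perfectMatchingCount_compl_le_exp_mul_add (hV : Fintype.card V = n) (hn : 0 < n)
    (hn_even : Even n) (hG : G.IsRegularOfDegree j) (hG' : G'.IsRegularOfDegree j)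
    (hj : 80 * j ≤ n) :
    (perfectMatchingCount Gᶜ univ : ℝ) ≤
      Real.exp (176128 * j ^ 3 / n ^ 2) * perfectMatchingCount G'ᶜ univ +
        (1 + Real.exp (176128 * j ^ 3 / n ^ 2)) * (3 / 10 * √n) ^ n := by
  set E := Real.exp (176128 * j ^ 3 / n ^ 2)
  set M := (3 / 10 * √(n : ℝ)) ^ n
  have hE : 0 < E := Real.exp_pos _
  have hpointwise : ∀ x, (matchingPoly G univ).eval x ≤
      E * (matchingPoly G' univ).eval x + (1 + E) * M := fun x ↦ by
    rcases le_total |x| (√n / 4) with hx | hx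
    · have hle := (abs_le.1 (abs_eval_matchingPoly_univ_le hV hn (fun v ↦ (hG v).le) hj hx)).2
      have hge := (abs_le.1 (abs_eval_matchingPoly_univ_le hV hn (fun v ↦ (hG' v).le) hj hx)).1
      linear_combination hle + E * hge
    · have hM : 0 ≤ (1 + E) * M := by positivity
      linarith [eval_matchingPoly_univ_le_exp_mul_of_sqrt_le_abs hV hn hn_even hG hG' hj hx]
  have hint := (integrable_eval_gaussianReal (matchingPoly G' univ) 0 1).const_mul E
  have h := integral_mono (integrable_eval_gaussianReal (matchingPoly G univ) 0 1)
    (hint.add (integrable_const _)) hpointwise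
  rwa [integral_add' hint (integrable_const _), integral_const_mul, integral_const,
    integral_matchingPoly_gaussianReal, integral_matchingPoly_gaussianReal, probReal_univ,
    one_smul] at h

lemma five_ninths_le_exp : (5 / 9 : ℝ) ≤ Real.exp (-(11 / 20)) := by
  calc (5 / 9 : ℝ) ≤ (-(11 / 200) + 1) ^ 10 := by norm_num
    _ ≤ Real.exp (-(11 / 200)) ^ 10 :=
        pow_le_pow_left₀ (by norm_num) (Real.add_one_le_exp _) 10
    _ = Real.exp (-(11 / 20)) := by
        rw [← Real.exp_nat_mul]
        norm_num

lemma five_ninths_pow_le_exp (hn : 441 ≤ n) :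
    (5 / 9 : ℝ) ^ n ≤ Real.exp (-(√n + 1) ^ 2 / 2) := by
  have hsq : √(n : ℝ) ^ 2 = n := Real.sq_sqrt n.cast_nonneg
  have hs : 21 ≤ √(n : ℝ) := Real.le_sqrt_of_sq_le (by norm_num; exact_mod_cast hn)
  refine (pow_le_pow_left₀ (by norm_num) five_ninths_le_exp n).trans ?_
  rw [← Real.exp_nat_mul, Real.exp_le_exp]
  nlinarith

lemma pow_le_eval_matchingPoly_univ (hV : Fintype.card V = n) (hn : 0 < n)
    (hG : ∀ v, G.degree v ≤ j) (hj : 80 * j ≤ n) (hx : √n ≤ x) :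
    (9 / 10 * √n) ^ n ≤ (matchingPoly G univ).eval x := by
  have hs : 0 < √(n : ℝ) := by positivity
  have hx0 : 0 < x := hs.trans_le hx
  have hj' : 80 * (j : ℝ) ≤ x ^ 2 :=
    calc 80 * (j : ℝ) ≤ n := by exact_mod_cast hj
      _ = √(n : ℝ) ^ 2 := (Real.sq_sqrt n.cast_nonneg).symm
      _ ≤ x ^ 2 := pow_le_pow_left₀ hs.le hx 2
  have hdiv : 2 * j / x ≤ x / 10 := by
    rw [div_le_iff₀ hx0]
    linarith [j.cast_nonneg (α := ℝ)]
  have h := sub_pow_le_eval_matchingPoly hG hx0 (by linarith [j.cast_nonneg (α := ℝ)]) univ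
  rw [card_univ, hV] at h
  exact (pow_le_pow_left₀ (by positivity) (by linarith) n).trans h

lemma pow_div_three_le_perfectMatchingCount_compl_add (hV : Fintype.card V = n) (hn : 441 ≤ n)
    (hn_even : Even n) (hG : ∀ v, G.degree v ≤ j) (hj : 80 * j ≤ n) :
    (√n / 2) ^ n / 3 ≤ perfectMatchingCount Gᶜ univ + (3 / 10 * √n) ^ n := by
  have hn0 : 0 < n := by lia
  set M := (3 / 10 * √(n : ℝ)) ^ n
  set f : ℝ → ℝ := fun x ↦ (matchingPoly G univ).eval x + M
  have hint : Integrable f (gaussianReal 0 1) :=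
    (integrable_eval_gaussianReal _ 0 1).add (integrable_const M)
  have hf : 0 ≤ f := fun x ↦ by
    rcases le_total |x| (√n / 4) with hx | hx
    · exact neg_le_iff_add_nonneg.1 (abs_le.1 (abs_eval_matchingPoly_univ_le hV hn0 hG hj hx)).1
    · exact add_nonneg (eval_matchingPoly_univ_pos hV hn0 hn_even hG hj hx).le (by positivity)
  have hsub : Set.Icc √(n : ℝ) (√n + 1) ⊆ {x | (9 / 10 * √n) ^ n ≤ f x} := fun x hx ↦
    le_add_of_le_of_nonneg (pow_le_eval_matchingPoly_univ hV hn0 hG hj hx.1) (by positivity)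
  calc (√n / 2) ^ n / 3 = (9 / 10 * √n) ^ n * ((5 / 9) ^ n / 3) := by
        rw [← mul_div_assoc, ← mul_pow]
        ring_nf
    _ ≤ (9 / 10 * √n) ^ n * (Real.exp (-(√n + 1) ^ 2 / 2) / 3) := by
        gcongr
        exact five_ninths_pow_le_exp hn
    _ ≤ (9 / 10 * √n) ^ n * (gaussianReal 0 1).real {x | (9 / 10 * √n) ^ n ≤ f x} := by
        gcongr
        exact (exp_div_three_le_gaussianReal_real_Icc (Real.sqrt_nonneg _)).trans
          (measureReal_mono hsub)
    _ ≤ ∫ x, f x ∂gaussianReal 0 1 :=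
        mul_meas_ge_le_integral_of_nonneg (ae_of_all _ hf) hint _
    _ = perfectMatchingCount Gᶜ univ + M := by
        rw [integral_add (integrable_eval_gaussianReal _ 0 1) (integrable_const M),
          integral_matchingPoly_gaussianReal, integral_const, probReal_univ, one_smul]

lemma pow_le_perfectMatchingCount_compl_div (hV : Fintype.card V = n) (hn : 441 ≤ n)
    (hn_small : 6 * n ^ 2 * (3 / 5 : ℝ) ^ n ≤ 1) (hn_even : Even n) (hG : ∀ v, G.degree v ≤ j)
    (hj : 80 * j ≤ n) :
    (3 / 10 * √n) ^ n ≤ (perfectMatchingCount Gᶜ univ : ℝ) / n ^ 2 := by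
  have hlower := pow_div_three_le_perfectMatchingCount_compl_add hV hn hn_even hG hj
  have hpow : (3 / 10 * √(n : ℝ)) ^ n = (3 / 5) ^ n * (√n / 2) ^ n := by
    rw [← mul_pow]
    ring
  set M := (3 / 10 * √(n : ℝ)) ^ n
  have hM : 6 * (n : ℝ) ^ 2 * M ≤ (√n / 2) ^ n :=
    calc 6 * (n : ℝ) ^ 2 * M = 6 * n ^ 2 * (3 / 5) ^ n * (√n / 2) ^ n := by
          rw [hpow]
          ring
      _ ≤ (√n / 2) ^ n := mul_le_of_le_one_left (by positivity) hn_small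
  have hMn : M ≤ n ^ 2 * M := by
    have hn1 : (1 : ℝ) ≤ n := by exact_mod_cast (by lia : 1 ≤ n)
    exact le_mul_of_one_le_left (by positivity) (one_le_pow₀ hn1)
  rw [le_div_iff₀ (by positivity)]
  linarith

theorem perfectMatchingCount_compl_pos (hV : Fintype.card V = n) (hn : 441 ≤ n)
    (hn_small : 6 * n ^ 2 * (3 / 5 : ℝ) ^ n ≤ 1) (hn_even : Even n) (hG : ∀ v, G.degree v ≤ j)
    (hj : 80 * j ≤ n) : 0 < perfectMatchingCount Gᶜ univ := by
  have hn0 : 0 < n := by lia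
  have h : (0 : ℝ) < perfectMatchingCount Gᶜ univ / n ^ 2 := lt_of_lt_of_le (by positivity)
    (pow_le_perfectMatchingCount_compl_div hV hn hn_small hn_even hG hj)
  rw [div_pos_iff_of_pos_right (by positivity)] at h
  exact_mod_cast h

theorem perfectMatchingCount_compl_le_exp_mul (hV : Fintype.card V = n) (hn : 441 ≤ n)
    (hn_small : 6 * n ^ 2 * (3 / 5 : ℝ) ^ n ≤ 1) (hn_even : Even n)
    (hG : G.IsRegularOfDegree j) (hG' : G'.IsRegularOfDegree j) (hj : 80 * j ≤ n) :
    (perfectMatchingCount Gᶜ univ : ℝ) ≤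
      Real.exp (176128 * (j ^ 3 + 1) / n ^ 2) * perfectMatchingCount G'ᶜ univ := by
  have hn0 : 0 < n := by lia
  set E := Real.exp (176128 * j ^ 3 / n ^ 2)
  set c := (perfectMatchingCount G'ᶜ univ : ℝ)
  have hE : 1 ≤ E := Real.one_le_exp (by positivity)
  have hE2 : E * Real.exp (2 / n ^ 2) ≤ Real.exp (176128 * (j ^ 3 + 1) / n ^ 2) := by
    rw [← Real.exp_add, ← add_div]
    gcongr
    linarith
  calc (perfectMatchingCount Gᶜ univ : ℝ) ≤ E * c + (1 + E) * (3 / 10 * √n) ^ n :=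
        perfectMatchingCount_compl_le_exp_mul_add hV hn0 hn_even hG hG' hj
    _ ≤ E * c + (E + E) * (c / n ^ 2) := by
        gcongr
        exact pow_le_perfectMatchingCount_compl_div hV hn hn_small hn_even (fun v ↦ (hG' v).le) hj
    _ = E * (2 / n ^ 2 + 1) * c := by ring
    _ ≤ E * Real.exp (2 / n ^ 2) * c := by
        gcongr
        exact Real.add_one_le_exp _
    _ ≤ Real.exp (176128 * (j ^ 3 + 1) / n ^ 2) * c := by gcongr

end Count

section Tuples

variable {n d k : ℕ}

open Classical in
/-- The `d`-tuples of pairwise edge-disjoint perfect matchings of `K_n` with the property `A`. -/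
noncomputable def pmTuples (n d : ℕ) (A : (Fin d → SimpleGraph (Fin n)) → Prop) :
    Finset (Fin d → SimpleGraph (Fin n)) :=
  {M | IsPMTuple M ∧ A M}

lemma mem_pmTuples {A : (Fin d → SimpleGraph (Fin n)) → Prop} {M : Fin d → SimpleGraph (Fin n)} :
    M ∈ pmTuples n d A ↔ IsPMTuple M ∧ A M := by
  simp [pmTuples]

lemma pmTuples_subset_pmTuples_true (A : (Fin d → SimpleGraph (Fin n)) → Prop) :
    pmTuples n d A ⊆ pmTuples n d fun _ ↦ True :=
  fun _ hM ↦ mem_pmTuples.2 ⟨(mem_pmTuples.1 hM).1, trivial⟩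

lemma tupleProb_eq_card_div_card (n d : ℕ) (A : (Fin d → SimpleGraph (Fin n)) → Prop) :
    tupleProb n d A = (#(pmTuples n d A) : ℝ) / #(pmTuples n d fun _ ↦ True) := by
  rw [tupleProb, pmTuples, pmTuples]
  congr! 4
  simp only [and_true]

lemma tupleProb_nonneg (n d : ℕ) (A : (Fin d → SimpleGraph (Fin n)) → Prop) :
    0 ≤ tupleProb n d A :=
  div_nonneg (Nat.cast_nonneg _) (Nat.cast_nonneg _)

lemma IsPMTuple.comp {M : Fin d → SimpleGraph (Fin n)} (hM : IsPMTuple M) {ι : Fin k → Fin d}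
    (hι : Function.Injective ι) : IsPMTuple (M ∘ ι) :=
  ⟨fun i ↦ hM.1 (ι i), fun _ _ hij ↦ hM.2 _ _ (hι.ne hij)⟩

lemma isPMTuple_comp_perm_iff {M : Fin d → SimpleGraph (Fin n)} (σ : Equiv.Perm (Fin d)) :
    IsPMTuple (M ∘ σ) ↔ IsPMTuple M := by
  refine ⟨fun h ↦ ?_, fun h ↦ h.comp σ.injective⟩
  simpa [Function.comp_assoc] using h.comp σ.symm.injective

lemma tupleProb_comp_perm (n : ℕ) (σ : Equiv.Perm (Fin d))
    (A : (Fin d → SimpleGraph (Fin n)) → Prop) :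
    tupleProb n d (fun M ↦ A (M ∘ σ)) = tupleProb n d A := by
  have hcard : #(pmTuples n d fun M ↦ A (M ∘ σ)) = #(pmTuples n d A) :=
    card_equiv (σ.symm.arrowCongr (Equiv.refl _)) fun M ↦ by
      rw [mem_pmTuples, mem_pmTuples, ← isPMTuple_comp_perm_iff σ]
      rfl
  rw [tupleProb_eq_card_div_card, tupleProb_eq_card_div_card, hcard]

lemma tupleProb_comp_eq_of_injective (n : ℕ) {ι κ : Fin k → Fin d} (hι : Function.Injective ι)
    (hκ : Function.Injective κ) (A : (Fin k → SimpleGraph (Fin n)) → Prop) :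
    tupleProb n d (fun M ↦ A (M ∘ ι)) = tupleProb n d (fun M ↦ A (M ∘ κ)) := by
  obtain ⟨σ, hσ⟩ := Equiv.Perm.exists_extending_pair κ ι hκ hι
  rw [← tupleProb_comp_perm n σ fun M ↦ A (M ∘ κ)]
  simp only [Function.comp_assoc, show σ ∘ κ = ι from funext hσ]

lemma one_le_card_pow_mul_tupleProb {A : (Fin k → SimpleGraph (Fin n)) → Prop}
    (hA : (pmTuples n k A).Nonempty) :
    1 ≤ (Fintype.card (SimpleGraph (Fin n)) : ℝ) ^ k * tupleProb n k A := by
  have htrue : (pmTuples n k fun _ ↦ True).Nonempty := hA.mono (pmTuples_subset_pmTuples_true A)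
  have hcard : #(pmTuples n k fun _ ↦ True) ≤ Fintype.card (SimpleGraph (Fin n)) ^ k := by
    simpa using card_le_univ (pmTuples n k fun _ ↦ True)
  rw [tupleProb_eq_card_div_card, ← mul_div_assoc, one_le_div (mod_cast htrue.card_pos)]
  exact_mod_cast hcard.trans (Nat.le_mul_of_pos_right _ hA.card_pos)

lemma tupleProb_comp_le_card_pow_mul {ι : Fin k → Fin d} (hι : Function.Injective ι)
    (A : (Fin k → SimpleGraph (Fin n)) → Prop) :
    tupleProb n d (fun M ↦ A (M ∘ ι)) ≤
      (Fintype.card (SimpleGraph (Fin n)) : ℝ) ^ k * tupleProb n k A := by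
  rcases (pmTuples n d fun M ↦ A (M ∘ ι)).eq_empty_or_nonempty with hempty | ⟨M, hM⟩
  · rw [tupleProb_eq_card_div_card, hempty, card_empty, Nat.cast_zero, zero_div]
    exact mul_nonneg (by positivity) (tupleProb_nonneg n k A)
  · have hMι : M ∘ ι ∈ pmTuples n k A :=
      mem_pmTuples.2 ⟨(mem_pmTuples.1 hM).1.comp hι, (mem_pmTuples.1 hM).2⟩
    refine le_trans ?_ (one_le_card_pow_mul_tupleProb ⟨_, hMι⟩)
    rw [tupleProb_eq_card_div_card]
    exact div_le_one_of_le₀ (mod_cast card_le_card (pmTuples_subset_pmTuples_true _))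
      (Nat.cast_nonneg _)

end Tuples

section Extension

variable {n d k m : ℕ} {q : ℝ}

lemma natCard_neighborSet_eq_one_iff {V : Type*} {M : SimpleGraph V} {v : V} :
    Nat.card (M.neighborSet v) = 1 ↔ ∃! w, M.Adj v w := by
  rw [Nat.card_coe_set_eq, Set.ncard_eq_one]
  simp only [Set.eq_singleton_iff_unique_mem, SimpleGraph.mem_neighborSet, ExistsUnique]

lemma isMatchingOn_univ_and_card_unmatched_eq_zero_iff {V : Type*} [Fintype V]
    {G M : SimpleGraph V} :
    IsMatchingOn G univ M ∧ #(unmatched univ M) = 0 ↔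
      M ≤ G ∧ ∀ v, Nat.card (M.neighborSet v) = 1 := by
  simp only [natCard_neighborSet_eq_one_iff, card_eq_zero, eq_empty_iff_forall_notMem,
    mem_unmatched, mem_univ, true_and, not_forall, not_not]
  exact ⟨fun ⟨hM, h⟩ ↦ ⟨hM.le, fun v ↦ existsUnique_of_exists_of_unique (h v)
    fun _ _ hw hw' ↦ hM.eq_of_adj hw hw'⟩,
    fun ⟨hle, h⟩ ↦ ⟨⟨hle, fun _ _ _ ↦ mem_univ _, fun v _ _ hw hw' ↦ (h v).unique hw hw'⟩,
      fun v ↦ (h v).exists⟩⟩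

lemma isPMTuple_succ_iff {M : Fin (k + 1) → SimpleGraph (Fin n)} :
    IsPMTuple M ↔ IsPMTuple (M ∘ Fin.castSucc) ∧ M (Fin.last k) ≤ (⨆ i, (M ∘ Fin.castSucc) i)ᶜ ∧
      ∀ v, Nat.card ((M (Fin.last k)).neighborSet v) = 1 := by
  simp only [IsPMTuple, Fin.forall_fin_succ', le_compl_iff_disjoint_right, disjoint_iSup_iff,
    Function.comp_apply, ne_eq, Fin.castSucc_inj, (Fin.castSucc_lt_last _).ne,
    (Fin.castSucc_lt_last _).ne', not_true_eq_false, not_false_eq_true, forall_const]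
  simp only [disjoint_comm (a := M (Fin.last k)), false_imp_iff, and_true]
  grind

lemma IsPMTuple.isRegularOfDegree_iSup {M : Fin k → SimpleGraph (Fin n)} (hM : IsPMTuple M)
    [DecidableRel (⨆ i, M i).Adj] : (⨆ i, M i).IsRegularOfDegree k := fun v ↦ by
  classical
  have hunion : (⨆ i, M i).neighborFinset v = univ.biUnion fun i ↦ (M i).neighborFinset v := by
    ext w
    simp
  have hdegree : ∀ i, #((M i).neighborFinset v) = 1 := fun i ↦ by
    rw [← hM.1 i v, Nat.card_eq_fintype_card, SimpleGraph.card_neighborSet_eq_degree,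
      SimpleGraph.degree]
  rw [SimpleGraph.degree, hunion, card_biUnion fun i _ j _ hij ↦ ?_]
  · simp only [hdegree, sum_const, card_univ, Fintype.card_fin, smul_eq_mul, mul_one]
  · rw [Function.onFun, ← disjoint_coe]
    simpa using SimpleGraph.disjoint_neighborSet.2 (hM.2 i j hij) v

lemma card_pmTuples_succ (n k : ℕ) (A : (Fin k → SimpleGraph (Fin n)) → Prop) :
    #(pmTuples n (k + 1) fun M ↦ A (M ∘ Fin.castSucc)) =
      ∑ H ∈ pmTuples n k A, perfectMatchingCount (⨆ i, H i)ᶜ univ := by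
  simp only [perfectMatchingCount, ← card_sigma]
  refine card_equiv (((Fin.snocEquiv fun _ ↦ SimpleGraph (Fin n)).symm.trans
    (Equiv.prodComm _ _)).trans (Equiv.sigmaEquivProd _ _).symm) fun M ↦ ?_
  change _ ↔ (⟨M ∘ Fin.castSucc, M (Fin.last k)⟩ : Σ _, _) ∈ _
  simp only [mem_pmTuples, isPMTuple_succ_iff, mem_sigma, mem_filter, mem_matchings,
    isMatchingOn_univ_and_card_unmatched_eq_zero_iff]
  tauto

/-- Every tuple of fewer than `d` edge-disjoint perfect matchings of `K_n` can be prolonged by one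
more perfect matching, and for tuples of equal length the numbers of ways to do so differ by a
factor of at most `q`. -/
structure IsUniformlyExtendable (n d : ℕ) (q : ℝ) : Prop where
  pos : ∀ ⦃j⦄, j < d → ∀ ⦃H : Fin j → SimpleGraph (Fin n)⦄, IsPMTuple H →
    0 < perfectMatchingCount (⨆ i, H i)ᶜ univ
  le_mul : ∀ ⦃j⦄, j < d → ∀ ⦃H H' : Fin j → SimpleGraph (Fin n)⦄, IsPMTuple H → IsPMTuple H' →
    (perfectMatchingCount (⨆ i, H i)ᶜ univ : ℝ) ≤ q * perfectMatchingCount (⨆ i, H' i)ᶜ univ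

lemma IsUniformlyExtendable.pmTuples_nonempty (h : IsUniformlyExtendable n d q) (hk : k ≤ d) :
    (pmTuples n k fun _ ↦ True).Nonempty := by
  induction k with
  | zero => exact ⟨Fin.elim0, mem_pmTuples.2 ⟨⟨fun i ↦ i.elim0, fun i ↦ i.elim0⟩, trivial⟩⟩
  | succ k ih =>
    rw [← card_pos, card_pmTuples_succ n k fun _ ↦ True]
    exact sum_pos (fun H hH ↦ h.pos hk (mem_pmTuples.1 hH).1) (ih (Nat.le_of_succ_le hk))

lemma sum_div_sum_le_mul_sum_div_sum {α : Type*} {s t : Finset α} (hst : s ⊆ t) {u w : α → ℝ}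
    (hu : 0 < ∑ a ∈ t, u a) (hw : 0 < ∑ a ∈ t, w a)
    (h : ∀ a ∈ t, ∀ b ∈ t, u a * w b ≤ q * (w a * u b)) :
    (∑ a ∈ s, u a) / ∑ a ∈ t, u a ≤ q * ((∑ a ∈ s, w a) / ∑ a ∈ t, w a) := by
  rw [← mul_div_assoc, div_le_div_iff₀ hu hw, mul_assoc, sum_mul_sum, sum_mul_sum]
  simp only [mul_sum]
  exact sum_le_sum fun a ha ↦ sum_le_sum fun b hb ↦ h a (hst ha) b hb

lemma IsUniformlyExtendable.tupleProb_succ (h : IsUniformlyExtendable n d q) (hk : k < d)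
    (A : (Fin k → SimpleGraph (Fin n)) → Prop) :
    tupleProb n (k + 1) (fun M ↦ A (M ∘ Fin.castSucc)) ≤ q * tupleProb n k A ∧
      tupleProb n k A ≤ q * tupleProb n (k + 1) (fun M ↦ A (M ∘ Fin.castSucc)) := by
  set w : (Fin k → SimpleGraph (Fin n)) → ℝ := fun H ↦ perfectMatchingCount (⨆ i, H i)ᶜ univ
  have hsub := pmTuples_subset_pmTuples_true A
  have hnonempty := h.pmTuples_nonempty hk.le
  have hsucc : tupleProb n (k + 1) (fun M ↦ A (M ∘ Fin.castSucc)) =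
      (∑ H ∈ pmTuples n k A, w H) / ∑ H ∈ pmTuples n k fun _ ↦ True, w H := by
    rw [tupleProb_eq_card_div_card, card_pmTuples_succ, card_pmTuples_succ n k fun _ ↦ True]
    push_cast
    rfl
  have hone : tupleProb n k A =
      (∑ _ ∈ pmTuples n k A, (1 : ℝ)) / ∑ _ ∈ pmTuples n k fun _ ↦ True, (1 : ℝ) := by
    simp only [tupleProb_eq_card_div_card, sum_const, nsmul_one]
  have hw : 0 < ∑ H ∈ pmTuples n k fun _ ↦ True, w H :=
    sum_pos (fun H hH ↦ Nat.cast_pos.2 (h.pos hk (mem_pmTuples.1 hH).1)) hnonempty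
  have hc : 0 < ∑ _ ∈ pmTuples n k fun _ ↦ True, (1 : ℝ) :=
    sum_pos (fun _ _ ↦ one_pos) hnonempty
  rw [hsucc, hone]
  constructor
  · refine sum_div_sum_le_mul_sum_div_sum hsub hw hc fun H hH H' hH' ↦ ?_
    simpa only [one_mul, mul_one] using h.le_mul hk (mem_pmTuples.1 hH).1 (mem_pmTuples.1 hH').1
  · refine sum_div_sum_le_mul_sum_div_sum hsub hc hw fun H hH H' hH' ↦ ?_
    simpa only [one_mul, mul_one] using h.le_mul hk (mem_pmTuples.1 hH').1 (mem_pmTuples.1 hH).1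

lemma IsUniformlyExtendable.tupleProb_castAdd (h : IsUniformlyExtendable n d q) (hq : 0 ≤ q)
    (A : (Fin k → SimpleGraph (Fin n)) → Prop) (hm : k + m ≤ d) :
    tupleProb n (k + m) (fun M ↦ A (M ∘ Fin.castAdd m)) ≤ q ^ m * tupleProb n k A ∧
      tupleProb n k A ≤ q ^ m * tupleProb n (k + m) (fun M ↦ A (M ∘ Fin.castAdd m)) := by
  induction m with
  | zero =>
    rw [pow_zero, one_mul, one_mul]
    exact ⟨le_rfl, le_rfl⟩
  | succ m ih =>
    obtain ⟨ih_le, ih_ge⟩ := ih (Nat.le_of_succ_le hm)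
    obtain ⟨step_le, step_ge⟩ := h.tupleProb_succ hm fun M ↦ A (M ∘ Fin.castAdd m)
    constructor
    · rw [pow_succ', mul_assoc]
      exact step_le.trans (mul_le_mul_of_nonneg_left ih_le hq)
    · rw [pow_succ, mul_assoc]
      exact ih_ge.trans (mul_le_mul_of_nonneg_left step_ge (pow_nonneg hq m))

lemma IsUniformlyExtendable.tupleProb_comp (h : IsUniformlyExtendable n d q) (hq : 1 ≤ q)
    {ι : Fin k → Fin d} (hι : Function.Injective ι) (A : (Fin k → SimpleGraph (Fin n)) → Prop) :
    tupleProb n d (fun M ↦ A (M ∘ ι)) ≤ q ^ d * tupleProb n k A ∧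
      tupleProb n k A ≤ q ^ d * tupleProb n d (fun M ↦ A (M ∘ ι)) := by
  obtain ⟨m, rfl⟩ := exists_add_of_le (by simpa using Fintype.card_le_of_injective ι hι : k ≤ d)
  rw [tupleProb_comp_eq_of_injective n hι (Fin.castAdd_injective k m)]
  obtain ⟨hle, hge⟩ := h.tupleProb_castAdd (by linarith) A le_rfl
  have hpow : q ^ m ≤ q ^ (k + m) := pow_le_pow_right₀ hq (by lia)
  exact ⟨hle.trans (mul_le_mul_of_nonneg_right hpow (tupleProb_nonneg _ _ _)),
    hge.trans (mul_le_mul_of_nonneg_right hpow (tupleProb_nonneg _ _ _))⟩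

theorem isUniformlyExtendable_exp (hn : 6400 ≤ n) (hn_small : 6 * n ^ 2 * (3 / 5 : ℝ) ^ n ≤ 1)
    (hn_even : Even n) (hd : d ^ 2 ≤ n) :
    IsUniformlyExtendable n d (Real.exp (176128 * d ^ 3 / n ^ 2)) := by
  classical
  have hn' : 441 ≤ n := by lia
  have hj : ∀ j < d, 80 * j ≤ n := fun j hjd ↦ by
    rcases le_total d 80 with hd80 | hd80
    · lia
    · nlinarith
  refine ⟨fun j hjd H hH ↦ ?_, fun j hjd H H' hH hH' ↦ ?_⟩
  · exact perfectMatchingCount_compl_pos (Fintype.card_fin n) hn' hn_small hn_even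
      (fun v ↦ (hH.isRegularOfDegree_iSup v).le) (hj j hjd)
  · refine (perfectMatchingCount_compl_le_exp_mul (Fintype.card_fin n) hn' hn_small hn_even
      hH.isRegularOfDegree_iSup hH'.isRegularOfDegree_iSup (hj j hjd)).trans ?_
    have hcube : (j : ℝ) ^ 3 + 1 ≤ d ^ 3 := by
      exact_mod_cast Nat.pow_lt_pow_left hjd three_ne_zero
    gcongr

end Extension

section Asymptotics

variable {p p' δ δ' s c K : ℝ}

/-- `p'` agrees with `p` up to a factor in `[1 - δ, 1 + δ]`. -/
def IsWithinFactor (δ p p' : ℝ) : Prop :=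
  (1 - δ) * p ≤ p' ∧ p' ≤ (1 + δ) * p

lemma IsWithinFactor.mono (h : IsWithinFactor δ p p') (hp : 0 ≤ p) (hδ : δ ≤ δ') :
    IsWithinFactor δ' p p' :=
  ⟨(mul_le_mul_of_nonneg_right (by linarith) hp).trans h.1,
    h.2.trans (mul_le_mul_of_nonneg_right (by linarith) hp)⟩

lemma isWithinFactor_of_le_mul (hp : 0 ≤ p) (hp' : 0 ≤ p') (hK : 1 ≤ K) (h : p' ≤ K * p) :
    IsWithinFactor K p p' :=
  ⟨(mul_nonpos_of_nonpos_of_nonneg (by linarith) hp).trans hp', by linarith⟩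

lemma isWithinFactor_of_le_exp_mul (hp : 0 ≤ p) (hs : 0 ≤ s) (hsc : s ≤ c)
    (hle : p' ≤ Real.exp s * p) (hge : p ≤ Real.exp s * p') :
    IsWithinFactor (Real.exp c * s) p p' := by
  have hexp : Real.exp s ≤ 1 + Real.exp s * s := by
    have h := mul_le_mul_of_nonneg_left (Real.one_sub_le_exp_neg s) (Real.exp_pos s).le
    rw [← Real.exp_add, add_neg_cancel, Real.exp_zero] at h
    linarith
  have hsc' : Real.exp s * s ≤ Real.exp c * s :=
    mul_le_mul_of_nonneg_right (Real.exp_le_exp.2 hsc) hs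
  refine IsWithinFactor.mono ⟨?_, hle.trans (mul_le_mul_of_nonneg_right hexp hp)⟩ hp hsc'
  calc (1 - Real.exp s * s) * p ≤ Real.exp (-s) * p := by
        have h1 := Real.one_sub_le_exp_neg s
        have h2 := le_mul_of_one_le_left hs (Real.one_le_exp hs)
        exact mul_le_mul_of_nonneg_right (by linarith) hp
    _ ≤ Real.exp (-s) * (Real.exp s * p') := by gcongr
    _ = p' := by rw [← mul_assoc, ← Real.exp_add, neg_add_cancel, Real.exp_zero, one_mul]

lemma eventually_six_mul_sq_mul_pow_le_one :
    ∀ᶠ n : ℕ in atTop, 6 * (n : ℝ) ^ 2 * (3 / 5) ^ n ≤ 1 := by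
  have h := (tendsto_pow_const_mul_const_pow_of_abs_lt_one 2
    (show |(3 / 5 : ℝ)| < 1 by norm_num [abs_of_pos])).const_mul 6
  simp only [mul_zero, ← mul_assoc] at h
  exact h.eventually_le_const one_pos

lemma eventually_isWithinFactor_tupleProb_comp :
    ∀ᶠ n : ℕ in atTop, ∀ d k : ℕ, Even n → d ^ 2 ≤ n →
      ∀ ι : Fin k → Fin d, Function.Injective ι → ∀ A : (Fin k → SimpleGraph (Fin n)) → Prop,
        IsWithinFactor (Real.exp 176128 * (176128 * (d ^ 4 / n ^ 2))) (tupleProb n k A)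
          (tupleProb n d fun M ↦ A (M ∘ ι)) := by
  filter_upwards [eventually_ge_atTop 6400, eventually_six_mul_sq_mul_pow_le_one]
    with n hn hn_small d k hn_even hd ι hι A
  have hpow : Real.exp (176128 * d ^ 3 / n ^ 2) ^ d = Real.exp (176128 * (d ^ 4 / n ^ 2)) := by
    rw [← Real.exp_nat_mul]
    ring_nf
  have hratio : (d : ℝ) ^ 4 / n ^ 2 ≤ 1 := by
    refine div_le_one_of_le₀ ?_ (by positivity)
    rw [pow_mul (d : ℝ) 2 2]
    exact pow_le_pow_left₀ (by positivity) (mod_cast hd) 2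
  have h := (isUniformlyExtendable_exp hn hn_small hn_even hd).tupleProb_comp
    (Real.one_le_exp (by positivity)) hι A
  rw [hpow] at h
  exact isWithinFactor_of_le_exp_mul (tupleProb_nonneg n k A) (by positivity) (by linarith) h.1 h.2

lemma isWithinFactor_tupleProb_comp_of_le {n d k B : ℕ} (hd : 1 ≤ d) (hdn : d ≤ n)
    (hB : Fintype.card (SimpleGraph (Fin n)) ^ n * n ^ 2 ≤ B) {ι : Fin k → Fin d}
    (hι : Function.Injective ι) (A : (Fin k → SimpleGraph (Fin n)) → Prop) :
    IsWithinFactor (B * (d ^ 4 / n ^ 2)) (tupleProb n k A) (tupleProb n d fun M ↦ A (M ∘ ι)) := by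
  have hkn : k ≤ n := (by simpa using Fintype.card_le_of_injective ι hι : k ≤ d).trans hdn
  have hcard : (1 : ℝ) ≤ Fintype.card (SimpleGraph (Fin n)) := mod_cast Fintype.card_pos
  refine (isWithinFactor_of_le_mul (tupleProb_nonneg _ _ _) (tupleProb_nonneg _ _ _)
    (one_le_pow₀ hcard) (tupleProb_comp_le_card_pow_mul hι A)).mono (tupleProb_nonneg _ _ _) ?_
  have hn : (0 : ℝ) < n := mod_cast hd.trans hdn
  calc (Fintype.card (SimpleGraph (Fin n)) : ℝ) ^ k
      ≤ Fintype.card (SimpleGraph (Fin n)) ^ n := pow_le_pow_right₀ hcard hkn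
    _ ≤ B / n ^ 2 := by
        rw [le_div_iff₀ (by positivity)]
        exact_mod_cast hB
    _ ≤ B / n ^ 2 * d ^ 4 :=
        le_mul_of_one_le_right (by positivity) (one_le_pow₀ (mod_cast hd))
    _ = B * (d ^ 4 / n ^ 2) := by ring

theorem stmt8_general :
    ∃ C : ℝ, 0 ≤ C ∧ ∀ n d k : ℕ, Even n → 1 ≤ d → d ^ 2 ≤ n →
      ∀ ι : Fin k → Fin d, Function.Injective ι → ∀ A : (Fin k → SimpleGraph (Fin n)) → Prop,
        (1 - C * (d ^ 4 / n ^ 2)) * tupleProb n k A ≤ tupleProb n d (fun M ↦ A fun j ↦ M (ι j)) ∧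
          tupleProb n d (fun M ↦ A fun j ↦ M (ι j)) ≤
            (1 + C * (d ^ 4 / n ^ 2)) * tupleProb n k A := by
  obtain ⟨N, hN⟩ := eventually_atTop.1 eventually_isWithinFactor_tupleProb_comp
  set B := ∑ n ∈ range N, Fintype.card (SimpleGraph (Fin n)) ^ n * n ^ 2
  refine ⟨Real.exp 176128 * 176128 + B, by positivity, fun n d k hn_even hd hdn ι hι A ↦ ?_⟩
  change IsWithinFactor _ (tupleProb n k A) (tupleProb n d fun M ↦ A (M ∘ ι))
  have hratio : (0 : ℝ) ≤ d ^ 4 / n ^ 2 := by positivity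
  rcases le_or_gt N n with hNn | hnN
  · refine (hN n hNn d k hn_even hdn ι hι A).mono (tupleProb_nonneg n k A) ?_
    rw [← mul_assoc]
    exact mul_le_mul_of_nonneg_right (le_add_of_nonneg_right B.cast_nonneg) hratio
  · have hB : Fintype.card (SimpleGraph (Fin n)) ^ n * n ^ 2 ≤ B :=
      single_le_sum_of_canonicallyOrdered
        (f := fun n ↦ Fintype.card (SimpleGraph (Fin n)) ^ n * n ^ 2) (mem_range.2 hnN)
    refine (isWithinFactor_tupleProb_comp_of_le hd ((Nat.le_self_pow two_ne_zero d).trans hdn) hB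
      hι A).mono (tupleProb_nonneg n k A) ?_
    exact mul_le_mul_of_nonneg_right (le_add_of_nonneg_left (by positivity)) hratio

lemma pow_four_div_sq_le_rpow {n d : ℕ} (hd : 1 ≤ d) (hdn : d ^ 3 ≤ n) :
    (d : ℝ) ^ 4 / n ^ 2 ≤ (n : ℝ) ^ (-(2 / 3) : ℝ) := by
  have hn : (0 : ℝ) < n := mod_cast (pow_pos hd 3).trans_le hdn
  calc (d : ℝ) ^ 4 / n ^ 2 = ((d : ℝ) ^ 3) ^ (4 / 3 : ℝ) / n ^ 2 := by
        rw [← Real.rpow_natCast_mul d.cast_nonneg, ← Real.rpow_natCast]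
        norm_num
    _ ≤ (n : ℝ) ^ (4 / 3 : ℝ) / n ^ 2 := by
        gcongr
        exact_mod_cast hdn
    _ = (n : ℝ) ^ (-(2 / 3) : ℝ) := by
        rw [← Real.rpow_natCast, ← Real.rpow_sub hn]
        norm_num

end Asymptotics

/-- There is a sequence `ε_n → 0` such that for every even `n`, every `4 ≤ d ≤ n-1` with
`d³ ≤ n`, every `1 ≤ k ≤ d` and every strictly increasing choice of `k` colours
`ι : Fin k → Fin d`, and every family `A` of `k`-tuples of perfect matchings, the
probability that the selected colours of `G''(n,d)` lie in `A` is within a factor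
`1 ± ε_n` of the probability that `G''(n,k)` lies in `A`. -/
theorem stmt8 :
    ∃ ε : ℕ → ℝ, Filter.Tendsto ε Filter.atTop (nhds 0) ∧
      ∀ n d k : ℕ, Even n → 4 ≤ d → d ≤ n - 1 → d ^ 3 ≤ n → 1 ≤ k → k ≤ d →
        ∀ ι : Fin k → Fin d, StrictMono ι →
          ∀ A : (Fin k → SimpleGraph (Fin n)) → Prop,
            (1 - ε n) * tupleProb n k A ≤
                tupleProb n d (fun M => A (fun j => M (ι j))) ∧
              tupleProb n d (fun M => A (fun j => M (ι j))) ≤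
                (1 + ε n) * tupleProb n k A := by
  obtain ⟨C, hC, h⟩ := stmt8_general
  refine ⟨fun n ↦ C * (n : ℝ) ^ (-(2 / 3) : ℝ), ?_, fun n d k hn hd _ hdn _ _ ι hι A ↦ ?_⟩
  · simpa using ((tendsto_rpow_neg_atTop (by norm_num : (0 : ℝ) < 2 / 3)).comp
      tendsto_natCast_atTop_atTop).const_mul C
  · have hd1 : 1 ≤ d := by lia
    exact IsWithinFactor.mono
      (h n d k hn hd1 ((Nat.pow_le_pow_right hd1 (by lia)).trans hdn) ι hι.injective A)
      (tupleProb_nonneg n k A) (mul_le_mul_of_nonneg_left (pow_four_div_sq_le_rpow hd1 hdn) hC)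
end
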